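/- Let Γ = ℤ^5 ⋊ ℤ/4 where the generator of ℤ/4 acts on ℤ^5 by the matrix [[1,1,0,0,0],[-1,0,0,-1,0],[0,0,0,0,-1],[-1,0,0,0,0],[0,0,-1,0,0]]. Then H^1(Γ,ℤ) ≅ ℤ^2; H^2(Γ,ℤ) ≅ ℤ^2 ⊕ ℤ/4; H^3(Γ,ℤ) ≅ ℤ^2 ⊕ (ℤ/2)^4; H^4(Γ,ℤ) ≅ ℤ ⊕ (ℤ/4)^2 ⊕ (ℤ/2)^2; and H^i(Γ,ℤ) ≅ ℤ/4 ⊕ (ℤ/2)^5 for all i ≥ 5. -/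

import Mathlib

open Matrix

namespace Crystal

/-- The lattice `ℤ^n`, written multiplicatively so that it can be a factor of a semidirect
product of groups. -/
abbrev Lat (n : ℕ) : Type := Multiplicative (Fin n → ℤ)

/-- The invertible integer matrix determined by `M` with `M ^ (m + 1) = 1`. -/
def matUnit {n : ℕ} (M : Matrix (Fin n) (Fin n) ℤ) (m : ℕ) (hm : M ^ (m + 1) = 1) :
    (Matrix (Fin n) (Fin n) ℤ)ˣ :=
  ⟨M, M ^ m, by rw [← pow_succ']; exact hm, by rw [← pow_succ]; exact hm⟩

/-- Linear automorphisms of `ℤ^n` as multiplicative automorphisms of the multiplicative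
version of `ℤ^n`. -/
def linToAut (n : ℕ) : ((Fin n → ℤ) ≃ₗ[ℤ] (Fin n → ℤ)) →* MulAut (Lat n) :=
  MonoidHom.mk' (fun e => AddEquiv.toMultiplicative e.toAddEquiv) (fun _ _ => rfl)

/-- An invertible integer matrix acts on the (multiplicative) lattice `ℤ^n` by (left)
matrix-vector multiplication. -/
def glToAut (n : ℕ) : (Matrix (Fin n) (Fin n) ℤ)ˣ →* MulAut (Lat n) :=
  (linToAut n).comp
    ((LinearMap.GeneralLinearGroup.generalLinearEquiv ℤ (Fin n → ℤ)).toMonoidHom.comp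
      (Matrix.GeneralLinearGroup.toLin).toMonoidHom)

/-- The homomorphism from `ℤ/m` (written multiplicatively) to a group `G` sending the
generator `1` to a chosen element `α` satisfying `α ^ m = 1`. -/
def zmodHom {G : Type*} [Group G] (m : ℕ) [NeZero m] (α : G) (hα : α ^ m = 1) :
    Multiplicative (ZMod m) →* G :=
  MonoidHom.mk' (fun g => α ^ (g.toAdd.val)) (by
    intro a b
    show α ^ (ZMod.val (a.toAdd + b.toAdd)) = α ^ (ZMod.val a.toAdd) * α ^ (ZMod.val b.toAdd)
    rw [ZMod.val_add, ← pow_eq_pow_mod _ hα, pow_add])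

/-- The action of `ℤ/q` on the lattice `ℤ^n` in which the generator `1` of `ℤ/q` acts by left
multiplication by the integer matrix `M`; `M` is required to satisfy `M ^ q = 1`. -/
def matAction {n : ℕ} (q : ℕ) [NeZero q] (M : Matrix (Fin n) (Fin n) ℤ)
    (hq : M ^ q = 1) : Multiplicative (ZMod q) →* MulAut (Lat n) :=
  zmodHom q (glToAut n (matUnit M (q - 1) (by
      rwa [Nat.sub_add_cancel (Nat.one_le_iff_ne_zero.2 (NeZero.ne q))])))
    (by
      rw [← map_pow]
      convert map_one (glToAut n)
      ext i j
      rw [Units.val_pow_eq_pow_val]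
      simp [matUnit, hq])

/-- The crystallographic group `ℤ^n ⋊ ℤ/q` in which the generator `1` of `ℤ/q` acts on the
lattice `ℤ^n` by left multiplication by the integer matrix `M` (with `M ^ q = 1`). -/
abbrev Crys {n : ℕ} (q : ℕ) [NeZero q] (M : Matrix (Fin n) (Fin n) ℤ) (hq : M ^ q = 1) : Type :=
  SemidirectProduct (Lat n) (Multiplicative (ZMod q)) (matAction q M hq)


open CategoryTheory groupCohomology

variable {k : Type} [CommRing k]

lemma comp_contractNth {G H : Type*} [Monoid G] [Monoid H] (f : G →* H) {n : ℕ}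
    (j : Fin (n + 1)) (g : Fin (n + 1) → G) (i : Fin n) :
    f (Fin.contractNth j (· * ·) g i) = Fin.contractNth j (· * ·) (fun l => f (g l)) i := by
  rcases lt_trichotomy (i : ℕ) j with h | h | h
  · rw [Fin.contractNth_apply_of_lt _ _ _ _ h, Fin.contractNth_apply_of_lt _ _ _ _ h]
  · rw [Fin.contractNth_apply_of_eq _ _ _ _ h, Fin.contractNth_apply_of_eq _ _ _ _ h,
      _root_.map_mul]
  · rw [Fin.contractNth_apply_of_gt _ _ _ _ h, Fin.contractNth_apply_of_gt _ _ _ _ h]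

/-- The map of inhomogeneous cochain complexes induced (contravariantly in the group,
covariantly in the coefficients) by a group homomorphism `f : H →* G` together with a
compatible linear map `τ : A → B` of coefficients. -/
def cochainsMap {G H : Type} [Group G] [Group H] (A : Rep k G) (B : Rep k H)
    (f : H →* G) (τ : A →ₗ[k] B)
    (hcomp : ∀ (h : H) (a : A), τ (A.ρ (f h) a) = B.ρ h (τ a)) :
    inhomogeneousCochains A ⟶ inhomogeneousCochains B where
  f n := ModuleCat.ofHom
    { toFun := fun F v => τ (F (fun i => f (v i)))
      map_add' := fun x y => by funext v; simp
      map_smul' := fun r x => by funext v; simp }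
  comm' i j hij := by
    have hij' : i + 1 = j := hij
    subst hij'
    rw [inhomogeneousCochains.d_def, inhomogeneousCochains.d_def]
    ext F v
    show (inhomogeneousCochains.d B i).hom (fun w => τ (F (fun l => f (w l)))) v
      = τ ((inhomogeneousCochains.d A i).hom F (fun l => f (v l)))
    simp only [inhomogeneousCochains.d_hom_apply, map_add, map_sum, _root_.map_smul]
    congr 1
    · exact (hcomp (v 0) _).symm
    · refine Finset.sum_congr rfl fun j' _ => ?_
      have hc : (fun l => f (j'.contractNth (· * ·) v l))
          = j'.contractNth (· * ·) (fun l => f (v l)) := by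
        funext l
        exact comp_contractNth f j' v l
      rw [hc]

lemma cochainsMap_eq_id {G : Type} [Group G] (A : Rep k G) (f : G →* G) (τ : A →ₗ[k] A)
    (hcomp : ∀ (h : G) (a : A), τ (A.ρ (f h) a) = A.ρ h (τ a))
    (hf : ∀ x, f x = x) (hτ : ∀ a, τ a = a) :
    cochainsMap A A f τ hcomp = 𝟙 _ := by
  apply HomologicalComplex.Hom.ext
  funext n
  ext F v
  show τ (F (fun i => f (v i))) = F v
  simp only [hf, hτ]

lemma cochainsMap_comp {G H K : Type} [Group G] [Group H] [Group K]
    (A : Rep k G) (B : Rep k H) (C : Rep k K)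
    (f₁ : H →* G) (τ₁ : A →ₗ[k] B) (h₁ : ∀ (h : H) (a : A), τ₁ (A.ρ (f₁ h) a) = B.ρ h (τ₁ a))
    (f₂ : K →* H) (τ₂ : B →ₗ[k] C) (h₂ : ∀ (h : K) (a : B), τ₂ (B.ρ (f₂ h) a) = C.ρ h (τ₂ a))
    (f₃ : K →* G) (τ₃ : A →ₗ[k] C) (h₃ : ∀ (h : K) (a : A), τ₃ (A.ρ (f₃ h) a) = C.ρ h (τ₃ a))
    (hf : ∀ x, f₁ (f₂ x) = f₃ x) (hτ : ∀ a, τ₂ (τ₁ a) = τ₃ a) :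
    cochainsMap A B f₁ τ₁ h₁ ≫ cochainsMap B C f₂ τ₂ h₂ = cochainsMap A C f₃ τ₃ h₃ := by
  apply HomologicalComplex.Hom.ext
  funext n
  ext F v
  show τ₂ (τ₁ (F (fun i => f₁ (f₂ (v i))))) = τ₃ (F (fun i => f₃ (v i)))
  simp only [hf]
  exact hτ _

/-- Given an action `φ` of a group `G` on a group `L` and a representation `ψ` of `G` on a
`k`-module `V`, this is `H^j(L, V)` (with `L` acting trivially on the coefficients `V`),
endowed with the `G`-action functorially induced by the action of `G` on `L` and on `V`:
`g` acts via the conjugation automorphism `φ g⁻¹` of `L` and via `ψ g` on `V`. -/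
noncomputable def cohRep {G L V : Type} [Group G] [Group L] [AddCommGroup V] [Module k V]
    (φ : G →* MulAut L) (ψ : Representation k G V) (j : ℕ) : Rep k G :=
  Rep.of (X := groupCohomology (Rep.trivial k L V) j)
    { toFun := fun g => ModuleCat.Hom.hom <| HomologicalComplex.homologyMap
        (cochainsMap (Rep.trivial k L V) (Rep.trivial k L V) (φ g⁻¹).toMonoidHom (ψ g)
          (fun _ _ => rfl)) j
      map_one' := by
        have h := cochainsMap_eq_id (Rep.trivial k L V) (φ 1⁻¹).toMonoidHom (ψ 1)
          (fun _ _ => rfl) (fun x => by simp) (fun a => by simp)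
        exact (congrArg (fun c => ModuleCat.Hom.hom (HomologicalComplex.homologyMap c j)) h).trans
          (congrArg ModuleCat.Hom.hom (HomologicalComplex.homologyMap_id _ j))
      map_mul' := fun g₁ g₂ => by
        have h := cochainsMap_comp (Rep.trivial k L V) (Rep.trivial k L V) (Rep.trivial k L V)
          (φ g₂⁻¹).toMonoidHom (ψ g₂) (fun _ _ => rfl)
          (φ g₁⁻¹).toMonoidHom (ψ g₁) (fun _ _ => rfl)
          (φ (g₁ * g₂)⁻¹).toMonoidHom (ψ (g₁ * g₂)) (fun _ _ => rfl)
          (fun x => by simp [_root_.mul_inv_rev]) (fun a => by simp)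
        rw [← h, HomologicalComplex.homologyMap_comp]
        rfl }


/-- `H^i(G, H^j(L, ℤ))`: the `i`-th cohomology of the cyclic group `ℤ/q` with coefficients in
the `j`-th cohomology of the lattice `ℤ^n` (with trivial `ℤ` coefficients), where the
`ℤ/q`-action on `H^j(ℤ^n, ℤ)` is the one functorially induced by the matrix action on the
lattice. -/
noncomputable abbrev cohOfCoh {n : ℕ} (q : ℕ) [NeZero q] (M : Matrix (Fin n) (Fin n) ℤ)
    (hq : M ^ q = 1) (i j : ℕ) : ModuleCat ℤ :=
  groupCohomology
    (cohRep (matAction q M hq) (1 : Representation ℤ (Multiplicative (ZMod q)) ℤ) j) i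

/-- `H^k(Γ, ℤ)` for `Γ = ℤ^n ⋊ ℤ/q`, with trivial coefficients `ℤ`. -/
noncomputable abbrev cohCrys {n : ℕ} (q : ℕ) [NeZero q] (M : Matrix (Fin n) (Fin n) ℤ)
    (hq : M ^ q = 1) (k : ℕ) : ModuleCat ℤ :=
  groupCohomology (Rep.trivial ℤ (Crys q M hq) ℤ) k

end Crystal

/-- The holonomy matrix. -/
def holM : Matrix (Fin 5) (Fin 5) ℤ := !![1, 1, 0, 0, 0; -1, 0, 0, -1, 0; 0, 0, 0, 0, -1; -1, 0, 0, 0, 0; 0, 0, -1, 0, 0]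

lemma holM_pow : holM ^ 4 = 1 := by decide

/-- `H^k(ℤ^5 ⋊ ℤ/4, ℤ)`, where the generator of `ℤ/4` acts on `ℤ^5` by left
multiplication by the matrix `holM`. -/
noncomputable abbrev H (k : ℕ) : ModuleCat ℤ := Crystal.cohCrys 4 holM holM_pow k

/-- `H^i(ℤ/4, H^j(ℤ^5, ℤ))`, with the functorially induced action on coefficients. -/
noncomputable abbrev Hc (i j : ℕ) : ModuleCat ℤ := Crystal.cohOfCoh 4 holM holM_pow i j

/-!
In a suitable basis `u, v, t, e, f` of the lattice, the generator `x` of `ℤ/4` rotates the plane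
`⟨u, v⟩`, sends `t` to itself up to an element of that plane, and exchanges `e` and `f`. Hence `Γ`
is obtained from the wallpaper group `p4 = ⟨u, v⟩ ⋊ ⟨x⟩` by adjoining first `t`, which gives `I4`,
and then `e` and `f`. Its cohomology is computed by a small complex built along the same steps:
the total complex of the Koszul complex of `u, v` over the 2-periodic complex of `⟨x⟩`, then the
homotopy fibre of `t - 1`, then the Koszul complex of `e, f`, whose middle and last terms carry
the action of `I4` twisted by the permutation representation `ℤ[ℤ/2]` and by the sign character.

For an arbitrary representation this complex has the invariants as cohomology in degree `0`, turns
short exact sequences into short exact sequences, and is acyclic on functions on `Γ`, where every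
difference equation `b (g * u) - b g = c g` has a solution. Dimension shifting therefore
identifies its cohomology with group cohomology.

On the trivial module `ℤ` the operators `e - 1` and `f - 1` vanish, so that `Hⁿ(Γ, ℤ) ≅ Hⁿ(I4, ℤ)
⊕ Hⁿ⁻¹(I4, ℤ[ℤ/2]) ⊕ Hⁿ⁻²(I4, ℤ⁻)`. On each of the three modules `u`, `v` and `t` act trivially
and `x² = 1`, which makes the differentials of `I4` explicit enough to read off all cohomology
groups in terms of the cohomology of `⟨x⟩` and of quotients such as `V / (2, 1 + x)`.
-/

section DeltaFunctor

open CategoryTheory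

variable {𝒜 ℬ : Type*} [Category* 𝒜] [Category* ℬ] [Limits.HasZeroMorphisms 𝒜] [Abelian ℬ]

/-- If the middle term has no first cohomology, the connecting map identifies the first cohomology
of the subcomplex with a cokernel in degree zero. -/
noncomputable def homologyOneIsoCokernel {S : ShortComplex (CochainComplex ℬ ℕ)}
    (hS : S.ShortExact) (h : Limits.IsZero (S.X₂.homology 1)) :
    S.X₁.homology 1 ≅ Limits.cokernel (HomologicalComplex.homologyMap S.g 0) :=
  have := hS.epi_δ 0 1 rfl h
  (hS.homology_exact₃ 0 1 rfl).gIsCokernel.coconePointUniqueUpToIso (Limits.colimit.isColimit _)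

/-- Dimension shifting. Both functors are effaced by the same short exact sequences, so naturality
is needed only in degree zero. -/
theorem nonempty_homology_iso_of_effaceable (𝒞 𝒟 : 𝒜 ⥤ CochainComplex ℬ ℕ)
    [𝒞.PreservesZeroMorphisms] [𝒟.PreservesZeroMorphisms]
    (exact𝒞 : ∀ {S : ShortComplex 𝒜}, S.ShortExact → (S.map 𝒞).ShortExact)
    (exact𝒟 : ∀ {S : ShortComplex 𝒜}, S.ShortExact → (S.map 𝒟).ShortExact)
    (efface : ∀ A : 𝒜, ∃ S : ShortComplex 𝒜, S.ShortExact ∧ S.X₁ = A ∧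
      ∀ n, Limits.IsZero ((𝒞.obj S.X₂).homology (n + 1)) ∧
        Limits.IsZero ((𝒟.obj S.X₂).homology (n + 1)))
    (e : 𝒞 ⋙ HomologicalComplex.homologyFunctor ℬ _ 0 ≅
      𝒟 ⋙ HomologicalComplex.homologyFunctor ℬ _ 0) (n : ℕ) (A : 𝒜) :
    Nonempty ((𝒞.obj A).homology n ≅ (𝒟.obj A).homology n) := by
  induction n generalizing A with
  | zero => exact ⟨e.app A⟩
  | succ n ih =>
    obtain ⟨S, hS, rfl, hX₂⟩ := efface A
    rcases n with _ | n
    · exact ⟨homologyOneIsoCokernel (exact𝒞 hS) (hX₂ 0).1 ≪≫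
        Limits.cokernel.mapIso _ _ (e.app S.X₂) (e.app S.X₃) (e.hom.naturality S.g) ≪≫
        (homologyOneIsoCokernel (exact𝒟 hS) (hX₂ 0).2).symm⟩
    · obtain ⟨i⟩ := ih S.X₃
      exact ⟨((exact𝒞 hS).δIso (n + 1) (n + 2) rfl (hX₂ n).1 (hX₂ (n + 1)).1).symm ≪≫ i ≪≫
        (exact𝒟 hS).δIso (n + 1) (n + 2) rfl (hX₂ n).2 (hX₂ (n + 1)).2⟩

end DeltaFunctor

section GroupCohomology

open CategoryTheory

section

variable {ℬ : Type*} [Category* ℬ] [Limits.HasZeroMorphisms ℬ] [CategoryWithHomology ℬ]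

/-- A kernel of the first differential, compared with the cocycles of degree zero. -/
noncomputable def isoCyclesZero (K : CochainComplex ℬ ℕ) {Z : ℬ} (ι : Z ⟶ K.X 0)
    (w : ι ≫ K.d 0 1 = 0) (hι : Limits.IsLimit (Limits.KernelFork.ofι ι w)) : Z ≅ K.cycles 0 :=
  hι.conePointUniqueUpToIso (K.cyclesIsKernel 0 1 (by simp))

lemma isoCyclesZero_hom_iCycles (K : CochainComplex ℬ ℕ) {Z : ℬ} (ι : Z ⟶ K.X 0)
    (w : ι ≫ K.d 0 1 = 0) (hι : Limits.IsLimit (Limits.KernelFork.ofι ι w)) :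
    (isoCyclesZero K ι w hι).hom ≫ K.iCycles 0 = ι :=
  hι.conePointUniqueUpToIso_hom_comp _ Limits.WalkingParallelPair.zero

/-- A natural choice `I` of kernels of the first differential is the cohomology functor in degree
zero. -/
noncomputable def homologyZeroIsoOfIsKernel {𝒜 : Type*} [Category* 𝒜]
    (𝒞 : 𝒜 ⥤ CochainComplex ℬ ℕ) (I : 𝒜 ⥤ ℬ) (ι : ∀ A, I.obj A ⟶ (𝒞.obj A).X 0)
    (w : ∀ A, ι A ≫ (𝒞.obj A).d 0 1 = 0)
    (hι : ∀ A, Limits.IsLimit (Limits.KernelFork.ofι (ι A) (w A)))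
    (naturality : ∀ {A B} (f : A ⟶ B), I.map f ≫ ι B = ι A ≫ (𝒞.map f).f 0) :
    I ≅ 𝒞 ⋙ HomologicalComplex.homologyFunctor ℬ _ 0 :=
  NatIso.ofComponents
    (fun A => isoCyclesZero (𝒞.obj A) (ι A) (w A) (hι A) ≪≫ (𝒞.obj A).isoHomologyπ₀)
    (fun {A B} f => by
      have cycles_naturality : I.map f ≫ (isoCyclesZero (𝒞.obj B) (ι B) (w B) (hι B)).hom =
          (isoCyclesZero (𝒞.obj A) (ι A) (w A) (hι A)).hom ≫
            HomologicalComplex.cyclesMap (𝒞.map f) 0 := by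
        rw [← cancel_mono ((𝒞.obj B).iCycles 0), Category.assoc, Category.assoc,
          HomologicalComplex.cyclesMap_i, isoCyclesZero_hom_iCycles, naturality,
          reassoc_of% isoCyclesZero_hom_iCycles]
      change I.map f ≫ (isoCyclesZero _ _ _ (hι B)).hom ≫ (𝒞.obj B).homologyπ 0 =
        ((isoCyclesZero _ _ _ (hι A)).hom ≫ (𝒞.obj A).homologyπ 0) ≫
          HomologicalComplex.homologyMap (𝒞.map f) 0
      rw [reassoc_of% cycles_naturality, Category.assoc,
        HomologicalComplex.homologyπ_naturality])

end

variable (k G V : Type) [CommRing k] [Group G] [AddCommGroup V] [Module k V]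

/-- The coinduced representation: `G` acts on functions `G → V` by right translation. -/
def rightTranslation : Representation k G (G → V) where
  toFun g := LinearMap.funLeft k V (· * g)
  map_one' := by ext; simp [LinearMap.funLeft_apply]
  map_mul' g h := by ext; simp [LinearMap.funLeft_apply, mul_assoc]

variable {k G V}

@[simp]
lemma rightTranslation_apply (g : G) (b : G → V) (h : G) :
    rightTranslation k G V g b h = b (h * g) := rfl

/-- `rightTranslation` is Mathlib's coinduction from the trivial subgroup, which makes Shapiro's
lemma available. -/
def rightTranslationIsoCoind : Rep.of (rightTranslation k G V) ≅
    Rep.coind (⊥ : Subgroup G).subtype (Rep.trivial k (⊥ : Subgroup G) V) where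
  hom := Rep.ofHom
    { toFun := fun b => ⟨b, fun g h => by
        obtain rfl := Subsingleton.elim g 1
        simp⟩
      map_add' := fun _ _ => rfl
      map_smul' := fun _ _ => rfl
      isIntertwining' := fun _ => rfl }
  inv := Rep.ofHom
    { toFun := fun b => b.1
      map_add' := fun _ _ => rfl
      map_smul' := fun _ _ => rfl
      isIntertwining' := fun _ => rfl }
  hom_inv_id := rfl
  inv_hom_id := rfl

theorem isZero_groupCohomology_rightTranslation (n : ℕ) :
    Limits.IsZero (groupCohomology (Rep.of (rightTranslation k G V)) (n + 1)) :=
  (isZero_groupCohomology_succ_of_subsingleton _ n).of_iso <|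
    (groupCohomology.functor k G (n + 1)).mapIso rightTranslationIsoCoind ≪≫
      groupCohomology.coindIso _ (n + 1)

/-- The embedding `a ↦ (g ↦ g • a)` of a representation into a coinduced one. -/
def orbitMap (A : Rep k G) : A ⟶ Rep.of (rightTranslation k G A) :=
  Rep.ofHom ((LinearMap.pi fun g => A.ρ g).intertwiningMap_of_isIntertwiningMap _ _ fun g a => by
    ext h
    simp)

instance (A : Rep k G) : Mono (orbitMap A) :=
  (Rep.mono_iff_injective _).2 fun a b hab => by
    simpa [orbitMap] using congrFun hab 1

theorem nonempty_iso_groupCohomology (𝒞 : Rep.{0} k G ⥤ CochainComplex (ModuleCat.{0} k) ℕ)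
    [𝒞.PreservesZeroMorphisms]
    (exact : ∀ {S : ShortComplex (Rep k G)}, S.ShortExact → (S.map 𝒞).ShortExact)
    (acyclic : ∀ (V : Type) [AddCommGroup V] [Module k V] (n : ℕ),
      Limits.IsZero ((𝒞.obj (Rep.of (rightTranslation k G V))).homology (n + 1)))
    (e : 𝒞 ⋙ HomologicalComplex.homologyFunctor _ _ 0 ≅ Rep.invariantsFunctor k G)
    (n : ℕ) (A : Rep k G) :
    Nonempty ((𝒞.obj A).homology n ≅ groupCohomology A n) := by
  refine nonempty_homology_iso_of_effaceable 𝒞 (groupCohomology.cochainsFunctor k G) exact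
    (fun hS => groupCohomology.map_cochainsFunctor_shortExact hS) (fun A => ?_) (e ≪≫ ?_) n A
  · exact ⟨ShortComplex.mk (orbitMap A) (Limits.cokernel.π _) (Limits.cokernel.condition _),
      { exact := ShortComplex.exact_cokernel _ }, rfl, fun n =>
        ⟨acyclic A n, isZero_groupCohomology_rightTranslation n⟩⟩
  · exact (NatIso.ofComponents groupCohomology.H0Iso
      fun f => groupCohomology.map_id_comp_H0Iso_hom f).symm

end GroupCohomology

section PeriodicComplex

/-- A cochain complex of `k`-modules whose differential depends only on the parity of the degree.
All cochains live in a single module `X`, the differential out of degree `n` is `d n.bodd`, and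
the cochains of degree `n` are the elements of `F (n + 1)`; the shift leaves room for `F 0 = ⊥`. -/
structure PeriodicComplex (k X : Type*) [CommRing k] [AddCommGroup X] [Module k X] where
  d : Bool → X →ₗ[k] X
  F : ℕ → Submodule k X
  d_d : ∀ p x, d (!p) (d p x) = 0
  F_zero : F 0 = ⊥
  d_mem : ∀ {p m x}, x ∈ F m → d p x ∈ F (m + 1)

namespace PeriodicComplex

variable {k X Y Z X' Y' Z' X'' Y'' Z'' : Type*} [CommRing k] [AddCommGroup X] [Module k X]
  [AddCommGroup Y] [Module k Y] [AddCommGroup Z] [Module k Z]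
  [AddCommGroup X'] [Module k X'] [AddCommGroup Y'] [Module k Y']
  [AddCommGroup Z'] [Module k Z']
  [AddCommGroup X''] [Module k X''] [AddCommGroup Y''] [Module k Y'']
  [AddCommGroup Z''] [Module k Z'']

/-- Morphisms of parity-dependent complexes, themselves allowed to depend on the parity. -/
structure Hom (C : PeriodicComplex k X) (D : PeriodicComplex k Y) where
  toFun : Bool → X →ₗ[k] Y
  comm : ∀ p x, toFun (!p) (C.d p x) = D.d p (toFun p x)
  map_mem : ∀ {p m x}, x ∈ C.F m → toFun p x ∈ D.F m

instance (C : PeriodicComplex k X) (D : PeriodicComplex k Y) :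
    CoeFun (Hom C D) fun _ => Bool → X →ₗ[k] Y := ⟨Hom.toFun⟩

variable {C : PeriodicComplex k X} {D : PeriodicComplex k Y} {E : PeriodicComplex k Z}
  {C' : PeriodicComplex k X'} {D' : PeriodicComplex k Y'} {E' : PeriodicComplex k Z'}
  {C'' : PeriodicComplex k X''} {D'' : PeriodicComplex k Y''} {E'' : PeriodicComplex k Z''}

lemma d_not_d (C : PeriodicComplex k X) (p : Bool) (x : X) : C.d p (C.d (!p) x) = 0 := by
  simpa using C.d_d (!p) x

lemma Hom.comm_not (f : Hom C D) (p : Bool) (x : X) : f p (C.d (!p) x) = D.d (!p) (f (!p) x) := by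
  simpa using f.comm (!p) x

/-- Exactness of `C ⟶ D ⟶ E` at `D` in each degree. -/
def Hom.Exact (f : Hom C D) (g : Hom D E) : Prop :=
  ∀ p m, ∀ y ∈ D.F m, g p y = 0 ↔ ∃ x ∈ C.F m, f p x = y

/-- Surjectivity in each degree. -/
def Hom.Surjective (f : Hom C D) : Prop :=
  ∀ p m, ∀ y ∈ D.F m, ∃ x ∈ C.F m, f p x = y

/-- Vanishing of the cohomology in positive degrees. -/
def Acyclic (C : PeriodicComplex k X) : Prop :=
  ∀ n, ∀ x ∈ C.F (n + 2), C.d (!n.bodd) x = 0 → ∃ y ∈ C.F (n + 1), C.d n.bodd y = x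

/-- The homotopy fibre of a morphism, i.e. the mapping cone shifted so that `C` keeps its degrees
and `D` is moved up by one. -/
def fiber (f : Hom C D) : PeriodicComplex k (X × Y) where
  d p := ((C.d p).comp (LinearMap.fst k X Y)).prod
    ((f p).comp (LinearMap.fst k X Y) - (D.d (!p)).comp (LinearMap.snd k X Y))
  F m := (C.F m).prod (D.F (m - 1))
  d_d p x := by simp [C.d_d, d_not_d, f.comm]
  F_zero := by simp [C.F_zero, D.F_zero]
  d_mem {p m x} hx := by
    refine ⟨C.d_mem hx.1, sub_mem (f.map_mem hx.1) ?_⟩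
    rcases m with _ | m
    · have hx₂ : x.2 = 0 := by simpa [D.F_zero] using hx.2
      simp [hx₂]
    · exact D.d_mem hx.2

@[simp]
lemma fiber_d_apply (f : Hom C D) (p : Bool) (x : X × Y) :
    (fiber f).d p x = (C.d p x.1, f p x.1 - D.d (!p) x.2) := rfl

/-- The morphism of fibres induced by a commutative square. -/
def fiberMap {f : Hom C D} {f' : Hom C' D'} (φ : Hom C C') (ψ : Hom D D')
    (h : ∀ p x, ψ p (f p x) = f' p (φ p x)) : Hom (fiber f) (fiber f') where
  toFun p := (φ p).prodMap (ψ (!p))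
  comm p x := by simp [φ.comm, h, ψ.comm_not]
  map_mem hx := ⟨φ.map_mem hx.1, ψ.map_mem hx.2⟩

@[simp]
lemma fiberMap_apply {f : Hom C D} {f' : Hom C' D'} (φ : Hom C C') (ψ : Hom D D')
    (h : ∀ p x, ψ p (f p x) = f' p (φ p x)) (p : Bool) (x : X × Y) :
    fiberMap φ ψ h p x = (φ p x.1, ψ (!p) x.2) := rfl

lemma fiberMap_exact {f : Hom C D} {f' : Hom C' D'} {f'' : Hom C'' D''}
    {φ : Hom C C'} {ψ : Hom D D'} {h : ∀ p x, ψ p (f p x) = f' p (φ p x)}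
    {φ' : Hom C' C''} {ψ' : Hom D' D''} {h' : ∀ p x, ψ' p (f' p x) = f'' p (φ' p x)}
    (hφ : φ.Exact φ') (hψ : ψ.Exact ψ') : (fiberMap φ ψ h).Exact (fiberMap φ' ψ' h') := by
  rintro p m ⟨x, y⟩ ⟨hx, hy⟩
  rw [fiberMap_apply, Prod.mk_eq_zero, hφ p m x hx, hψ (!p) (m - 1) y hy]
  constructor
  · rintro ⟨⟨a, ha, rfl⟩, b, hb, rfl⟩
    exact ⟨(a, b), ⟨ha, hb⟩, rfl⟩
  · rintro ⟨⟨a, b⟩, ⟨ha, hb⟩, hab⟩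
    exact ⟨⟨a, ha, congrArg Prod.fst hab⟩, b, hb, congrArg Prod.snd hab⟩

lemma fiberMap_surjective {f : Hom C D} {f' : Hom C' D'}
    {φ : Hom C C'} {ψ : Hom D D'} {h : ∀ p x, ψ p (f p x) = f' p (φ p x)}
    (hφ : φ.Surjective) (hψ : ψ.Surjective) : (fiberMap φ ψ h).Surjective := by
  rintro p m ⟨x, y⟩ ⟨hx, hy⟩
  obtain ⟨a, ha, rfl⟩ := hφ p m x hx
  obtain ⟨b, hb, rfl⟩ := hψ (!p) (m - 1) y hy
  exact ⟨(a, b), ⟨ha, hb⟩, rfl⟩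

theorem fiber_acyclic {f : Hom C D} (hC : C.Acyclic) (hD : D.Acyclic)
    (hf : ∀ y ∈ D.F 1, D.d false y = 0 → ∃ x ∈ C.F 1, C.d false x = 0 ∧ f false x = y) :
    (fiber f).Acyclic := by
  rintro n ⟨x, y⟩ ⟨hx, hy⟩ hd
  obtain ⟨hdx, hdy⟩ : C.d (!n.bodd) x = 0 ∧ f (!n.bodd) x - D.d n.bodd y = 0 := by
    simpa using hd
  obtain ⟨x₀, hx₀, rfl⟩ := hC n x hx hdx
  have cocycle : D.d n.bodd (f n.bodd x₀ - y) = 0 := by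
    rw [map_sub, ← f.comm, hdy]
  have mem : f n.bodd x₀ - y ∈ D.F (n + 1) := sub_mem (f.map_mem hx₀) hy
  rcases n with _ | n
  · obtain ⟨x₁, hx₁, hdx₁, hfx₁⟩ := hf _ mem cocycle
    exact ⟨(x₀ - x₁, 0), ⟨sub_mem hx₀ hx₁, zero_mem _⟩, by
      simp_all⟩
  · obtain ⟨y₀, hy₀, hdy₀⟩ := hD n _ mem (by simpa using cocycle)
    exact ⟨(x₀, y₀), ⟨hx₀, hy₀⟩, by simp [hdy₀]⟩

/-- A morphism to a fibre whose second component vanishes. -/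
def fiberLift (f : Hom C D) (g : Hom D E) (h : ∀ p x, g p (f p x) = 0) : Hom C (fiber g) where
  toFun p := (LinearMap.inl k Y Z).comp (f p)
  comm p x := by simp [f.comm, h]
  map_mem hx := ⟨f.map_mem hx, zero_mem _⟩

/-- The total complex of a double complex with the three columns `C ⟶ D ⟶ E`. -/
def tot (f : Hom C D) (g : Hom D E) (h : ∀ p x, g p (f p x) = 0) :
    PeriodicComplex k (X × Y × Z) := fiber (fiberLift f g h)

@[simp]
lemma tot_d_apply (f : Hom C D) (g : Hom D E) (h : ∀ p x, g p (f p x) = 0) (p : Bool)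
    (x : X × Y × Z) :
    (tot f g h).d p x = (C.d p x.1, f p x.1 - D.d (!p) x.2.1, E.d p x.2.2 - g (!p) x.2.1) := by
  simp [tot, fiberLift]

lemma mem_tot_F {f : Hom C D} {g : Hom D E} {h : ∀ p x, g p (f p x) = 0} {m : ℕ}
    {x : X × Y × Z} :
    x ∈ (tot f g h).F m ↔ x.1 ∈ C.F m ∧ x.2.1 ∈ D.F (m - 1) ∧ x.2.2 ∈ E.F (m - 2) := Iff.rfl

lemma ker_acyclic_of_exact {i : Hom C' C} {f : Hom C D} (hC' : C'.Acyclic)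
    (injective : ∀ p, Function.Injective (i p)) (exact : i.Exact f) (n : ℕ) (x : X)
    (hx : x ∈ C.F (n + 2)) (hfx : f (!n.bodd) x = 0) (hdx : C.d (!n.bodd) x = 0) :
    ∃ y ∈ C.F (n + 1), f n.bodd y = 0 ∧ C.d n.bodd y = x := by
  obtain ⟨w, hw, rfl⟩ := (exact (!n.bodd) (n + 2) x hx).1 hfx
  obtain ⟨w', hw', rfl⟩ := hC' n w hw (injective n.bodd (by
    rw [map_zero, i.comm_not, hdx]))
  exact ⟨i n.bodd w', i.map_mem hw', (exact _ _ _ (i.map_mem hw')).2 ⟨w', hw', rfl⟩,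
    (i.comm _ _).symm⟩

theorem tot_acyclic {f : Hom C D} {g : Hom D E} (h : ∀ p x, g p (f p x) = 0)
    (ker_acyclic : ∀ n, ∀ x ∈ C.F (n + 2), f (!n.bodd) x = 0 → C.d (!n.bodd) x = 0 →
      ∃ y ∈ C.F (n + 1), f n.bodd y = 0 ∧ C.d n.bodd y = x)
    (exact : f.Exact g) (surjective : g.Surjective) : (tot f g h).Acyclic := by
  rintro n ⟨x, y, z⟩ ⟨hx, hy, hz⟩ hd
  obtain ⟨hdx, hdy, hdz⟩ : C.d (!n.bodd) x = 0 ∧ f (!n.bodd) x - D.d n.bodd y = 0 ∧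
      E.d (!n.bodd) z - g n.bodd y = 0 := by simpa using hd
  obtain ⟨y₁, hy₁, rfl⟩ := surjective (!n.bodd) n z hz
  obtain ⟨x₁, hx₁, hfx₁⟩ := (exact n.bodd (n + 1) (y - D.d (!n.bodd) y₁)
    (sub_mem hy (D.d_mem hy₁))).1 (by rw [map_sub, g.comm_not, ← sub_eq_zero.1 hdz, sub_self])
  obtain ⟨x₂, hx₂, hfx₂, hdx₂⟩ := ker_acyclic n (x - C.d n.bodd x₁)
    (sub_mem hx (C.d_mem hx₁)) (by rw [map_sub, f.comm, hfx₁, map_sub, d_not_d, sub_zero, hdy])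
    (by rw [map_sub, hdx, C.d_d, sub_zero])
  exact ⟨(x₁ + x₂, -y₁, 0), ⟨add_mem hx₁ hx₂, neg_mem hy₁, zero_mem _⟩,
    by simp [hdx₂, hfx₂, hfx₁]⟩

section totMap

variable {f : Hom C D} {g : Hom D E} {h : ∀ p x, g p (f p x) = 0}
  {f' : Hom C' D'} {g' : Hom D' E'} {h' : ∀ p x, g' p (f' p x) = 0}
  {f'' : Hom C'' D''} {g'' : Hom D'' E''} {h'' : ∀ p x, g'' p (f'' p x) = 0}

/-- The morphism of total complexes induced by a morphism of three-column diagrams. -/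
def totMap (φ : Hom C C') (ψ : Hom D D') (χ : Hom E E')
    (hf : ∀ p x, ψ p (f p x) = f' p (φ p x)) (hg : ∀ p y, χ p (g p y) = g' p (ψ p y)) :
    Hom (tot f g h) (tot f' g' h') :=
  fiberMap φ (fiberMap ψ χ hg) fun p x => by simp [fiberLift, hf]

@[simp]
lemma totMap_apply (φ : Hom C C') (ψ : Hom D D') (χ : Hom E E')
    (hf : ∀ p x, ψ p (f p x) = f' p (φ p x)) (hg : ∀ p y, χ p (g p y) = g' p (ψ p y))
    (p : Bool) (x : X × Y × Z) :
    totMap (h := h) (h' := h') φ ψ χ hf hg p x = (φ p x.1, ψ (!p) x.2.1, χ p x.2.2) := by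
  cases p <;> rfl

lemma totMap_exact {φ : Hom C C'} {ψ : Hom D D'} {χ : Hom E E'}
    {hf : ∀ p x, ψ p (f p x) = f' p (φ p x)} {hg : ∀ p y, χ p (g p y) = g' p (ψ p y)}
    {φ' : Hom C' C''} {ψ' : Hom D' D''} {χ' : Hom E' E''}
    {hf' : ∀ p x, ψ' p (f' p x) = f'' p (φ' p x)} {hg' : ∀ p y, χ' p (g' p y) = g'' p (ψ' p y)}
    (hφ : φ.Exact φ') (hψ : ψ.Exact ψ') (hχ : χ.Exact χ') :
    (totMap (h := h) (h' := h') φ ψ χ hf hg).Exact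
      (totMap (h := h') (h' := h'') φ' ψ' χ' hf' hg') :=
  fiberMap_exact hφ (fiberMap_exact hψ hχ)

lemma totMap_surjective {φ : Hom C C'} {ψ : Hom D D'} {χ : Hom E E'}
    {hf : ∀ p x, ψ p (f p x) = f' p (φ p x)} {hg : ∀ p y, χ p (g p y) = g' p (ψ p y)}
    (hφ : φ.Surjective) (hψ : ψ.Surjective) (hχ : χ.Surjective) :
    (totMap (h := h) (h' := h') φ ψ χ hf hg).Surjective :=
  fiberMap_surjective hφ (fiberMap_surjective hψ hχ)

end totMap

end PeriodicComplex

end PeriodicComplex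

section ToCochainComplex

open CategoryTheory

namespace PeriodicComplex

universe v

variable {k : Type*} {X Y Z : Type v} [CommRing k] [AddCommGroup X] [Module k X]
  [AddCommGroup Y] [Module k Y] [AddCommGroup Z] [Module k Z]
  {C : PeriodicComplex k X} {D : PeriodicComplex k Y} {E : PeriodicComplex k Z}

/-- The differential out of degree `n`, restricted to the cochains of degree `n`. -/
def dRestrict (C : PeriodicComplex k X) (n : ℕ) : C.F (n + 1) →ₗ[k] C.F (n + 2) :=
  (C.d n.bodd).restrict fun _ hx => C.d_mem hx

lemma dRestrict_comp_dRestrict (C : PeriodicComplex k X) (n : ℕ) :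
    C.dRestrict (n + 1) ∘ₗ C.dRestrict n = 0 := by
  ext x
  change C.d (n + 1).bodd (C.d n.bodd x) = 0
  rw [Nat.bodd_succ, C.d_d]

/-- The cochain complex with the submodule `C.F (n + 1)` in degree `n`. -/
noncomputable def toCochainComplex (C : PeriodicComplex k X) :
    CochainComplex (ModuleCat.{v} k) ℕ :=
  CochainComplex.of (fun n => ModuleCat.of k (C.F (n + 1)))
    (fun n => ModuleCat.ofHom (C.dRestrict n))
    (fun n => ModuleCat.hom_ext (C.dRestrict_comp_dRestrict n))

lemma toCochainComplex_d (C : PeriodicComplex k X) (n : ℕ) :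
    C.toCochainComplex.d n (n + 1) = ModuleCat.ofHom (C.dRestrict n) :=
  CochainComplex.of_d _ (fun n => ModuleCat.ofHom (C.dRestrict n)) n

/-- The cochain map given by `f n.bodd` in degree `n`. -/
noncomputable def Hom.toCochainComplexMap (f : Hom C D) :
    C.toCochainComplex ⟶ D.toCochainComplex :=
  CochainComplex.ofHom
    (fun n => ModuleCat.ofHom ((f n.bodd).restrict fun _ hx => f.map_mem hx))
    (fun n => by
      rw [toCochainComplex_d, toCochainComplex_d]
      refine ModuleCat.hom_ext (LinearMap.ext fun (x : C.F (n + 1)) => Subtype.ext ?_)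
      change D.d n.bodd (f n.bodd x) = f (n + 1).bodd (C.d n.bodd x)
      rw [Nat.bodd_succ, f.comm])

theorem toCochainComplexMap_shortExact {f : Hom C D} {g : Hom D E}
    (w : f.toCochainComplexMap ≫ g.toCochainComplexMap = 0)
    (injective : ∀ p, Function.Injective (f p)) (exact : f.Exact g) (surjective : g.Surjective) :
    (ShortComplex.mk f.toCochainComplexMap g.toCochainComplexMap w).ShortExact := by
  refine HomologicalComplex.shortExact_of_degreewise_shortExact _ fun n => ?_
  refine ModuleCat.shortComplex_shortExact _ (fun y => ?_) (fun a b hab => ?_) (fun z => ?_)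
  · refine Subtype.ext_iff.trans ((exact n.bodd (n + 1) y.1 y.2).trans ?_)
    exact ⟨fun ⟨x, hx, hxy⟩ => ⟨⟨x, hx⟩, Subtype.ext hxy⟩,
      fun ⟨x, hxy⟩ => ⟨x.1, x.2, congrArg Subtype.val hxy⟩⟩
  · exact Subtype.ext (injective n.bodd (congrArg Subtype.val hab))
  · obtain ⟨y, hy, hyz⟩ := surjective n.bodd (n + 1) z.1 z.2
    exact ⟨⟨y, hy⟩, Subtype.ext hyz⟩

/-- The part of `C.toCochainComplex` in degrees `n`, `n + 1` and `n + 2`. -/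
noncomputable def shortComplex (C : PeriodicComplex k X) (n : ℕ) :
    ShortComplex (ModuleCat.{v} k) :=
  ShortComplex.moduleCatMk _ _ (C.dRestrict_comp_dRestrict n)

lemma toCochainComplex_sc' (C : PeriodicComplex k X) (n : ℕ) :
    C.toCochainComplex.sc' n (n + 1) (n + 2) = C.shortComplex n := by
  have h₁ := C.toCochainComplex_d n
  have h₂ := C.toCochainComplex_d (n + 1)
  dsimp [HomologicalComplex.sc', HomologicalComplex.shortComplexFunctor']
  congr 1

theorem Acyclic.isZero_homology (hC : C.Acyclic) (n : ℕ) :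
    Limits.IsZero (C.toCochainComplex.homology (n + 1)) := by
  rw [← HomologicalComplex.exactAt_iff_isZero_homology,
    HomologicalComplex.exactAt_iff' _ n (n + 1) (n + 2) (by simp) (by simp),
    toCochainComplex_sc', ShortComplex.moduleCat_exact_iff]
  intro (x : C.F (n + 2)) hx
  have cocycle : C.d (n + 1).bodd x = 0 := congrArg Subtype.val hx
  rw [Nat.bodd_succ] at cocycle
  obtain ⟨y, hy, hyx⟩ := hC n x x.2 cocycle
  exact ⟨(⟨y, hy⟩ : C.F (n + 1)), Subtype.ext hyx⟩

end PeriodicComplex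

end ToCochainComplex

section IsSubquotient

variable {k X Y T U : Type*} [CommRing k] [AddCommGroup X] [Module k X]
  [AddCommGroup Y] [Module k Y] [AddCommGroup T] [Module k T] [AddCommGroup U] [Module k U]

/-- `T` is isomorphic to the subquotient `Z / (Z ⊓ B)`, the isomorphism being presented as a
surjection from `Z` with kernel `B`. -/
def IsSubquotient (Z B : Submodule k X) (T : Type*) [AddCommGroup T] [Module k T] : Prop :=
  ∃ φ : Z →ₗ[k] T, Function.Surjective φ ∧ ∀ z, φ z = 0 ↔ ↑z ∈ B

namespace IsSubquotient

variable {Z B : Submodule k X} {Z' B' : Submodule k Y}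

lemma comap (h : IsSubquotient Z' B' T) (f : X →ₗ[k] Y) (map_mem : ∀ x ∈ Z, f x ∈ Z')
    (surjective : ∀ y ∈ Z', ∃ x ∈ Z, f x = y) (mem_iff : ∀ x ∈ Z, f x ∈ B' ↔ x ∈ B) :
    IsSubquotient Z B T := by
  obtain ⟨φ, hφ, ker⟩ := h
  refine ⟨φ ∘ₗ f.restrict map_mem, fun a => ?_, fun z => (ker _).trans (mem_iff z z.2)⟩
  obtain ⟨y, rfl⟩ := hφ a
  obtain ⟨x, hx, hxy⟩ := surjective y y.2
  exact ⟨⟨x, hx⟩, congrArg φ (Subtype.ext hxy)⟩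

lemma prod (h : IsSubquotient Z B T) (h' : IsSubquotient Z' B' U) :
    IsSubquotient (Z.prod Z') (B.prod B') (T × U) := by
  obtain ⟨φ, hφ, ker⟩ := h
  obtain ⟨φ', hφ', ker'⟩ := h'
  have fst_mem : ∀ x ∈ Z.prod Z', LinearMap.fst k X Y x ∈ Z := fun _ hx => hx.1
  have snd_mem : ∀ x ∈ Z.prod Z', LinearMap.snd k X Y x ∈ Z' := fun _ hx => hx.2
  refine ⟨(φ ∘ₗ (LinearMap.fst k X Y).restrict fst_mem).prod
    (φ' ∘ₗ (LinearMap.snd k X Y).restrict snd_mem), fun ⟨t, u⟩ => ?_, fun z => ?_⟩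
  · obtain ⟨x, rfl⟩ := hφ t
    obtain ⟨y, rfl⟩ := hφ' u
    exact ⟨⟨(x, y), x.2, y.2⟩, rfl⟩
  · exact Prod.mk_eq_zero.trans (and_congr (ker _) (ker' _))

lemma congr (h : IsSubquotient Z B T) (e : T ≃ₗ[k] U) : IsSubquotient Z B U := by
  obtain ⟨φ, hφ, ker⟩ := h
  exact ⟨e ∘ₗ φ, e.surjective.comp hφ, fun z => e.map_eq_zero_iff.trans (ker z)⟩

lemma of_linearMap (φ : X →ₗ[k] T) (surjective : ∀ t, ∃ x ∈ Z, φ x = t)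
    (eq_zero_iff : ∀ x ∈ Z, φ x = 0 ↔ x ∈ B) : IsSubquotient Z B T :=
  ⟨φ.domRestrict Z, fun t => (surjective t).elim fun x hx => ⟨⟨x, hx.1⟩, hx.2⟩,
    fun z => eq_zero_iff z z.2⟩

lemma punit_of_le (h : Z ≤ B) : IsSubquotient Z B PUnit :=
  of_linearMap 0 (fun _ => ⟨0, zero_mem _, rfl⟩) fun _ hx => iff_of_true rfl (h hx)

end IsSubquotient

namespace PeriodicComplex

/-- The cocycles of degree `m - 1`; there are none for `m = 0`. -/
def cocycles (C : PeriodicComplex k X) (m : ℕ) : Submodule k X :=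
  C.F m ⊓ LinearMap.ker (C.d !m.bodd)

/-- The coboundaries of degree `m - 1`. -/
def coboundaries (C : PeriodicComplex k X) (m : ℕ) : Submodule k X :=
  (C.F (m - 1)).map (C.d m.bodd)

lemma mem_cocycles {C : PeriodicComplex k X} {m : ℕ} {x : X} :
    x ∈ C.cocycles m ↔ x ∈ C.F m ∧ C.d (!m.bodd) x = 0 := Iff.rfl

lemma mem_coboundaries {C : PeriodicComplex k X} {m : ℕ} {x : X} :
    x ∈ C.coboundaries m ↔ ∃ y ∈ C.F (m - 1), C.d m.bodd y = x := Iff.rfl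

lemma isSubquotient_zero (C : PeriodicComplex k X) :
    IsSubquotient (C.cocycles 0) (C.coboundaries 0) PUnit := by
  rw [cocycles, C.F_zero, bot_inf_eq]
  exact .punit_of_le bot_le

section tot

variable {V W : Type*} [AddCommGroup V] [Module k V] [AddCommGroup W] [Module k W]
  {C : PeriodicComplex k X} {D : PeriodicComplex k Y} {E : PeriodicComplex k V}
  {f : Hom C D} {g : Hom D E} {h : ∀ p x, g p (f p x) = 0}

lemma cocycles_tot_of_eq_zero (hf : ∀ p, f p = 0) (hg : ∀ p, g p = 0) (m : ℕ) :
    (tot f g h).cocycles (m + 2) =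
      (C.cocycles (m + 2)).prod ((D.cocycles (m + 1)).prod (E.cocycles m)) := by
  ext x
  simp only [mem_cocycles, mem_tot_F, Submodule.mem_prod, tot_d_apply, hf, hg, Nat.bodd_succ,
    Bool.not_not, LinearMap.zero_apply, zero_sub, sub_zero, Prod.mk_eq_zero, neg_eq_zero]
  tauto

lemma coboundaries_tot_of_eq_zero (hf : ∀ p, f p = 0) (hg : ∀ p, g p = 0) (m : ℕ) :
    (tot f g h).coboundaries (m + 2) =
      (C.coboundaries (m + 2)).prod ((D.coboundaries (m + 1)).prod (E.coboundaries m)) := by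
  ext x
  simp only [mem_coboundaries, Submodule.mem_prod]
  constructor
  · rintro ⟨y, ⟨hy₁, hy₂, hy₃⟩, rfl⟩
    exact ⟨⟨y.1, hy₁, by simp⟩, ⟨-y.2.1, neg_mem hy₂, by simp [hf]⟩, ⟨y.2.2, hy₃, by simp [hg]⟩⟩
  · rintro ⟨⟨y₁, hy₁, h₁⟩, ⟨y₂, hy₂, h₂⟩, ⟨y₃, hy₃, h₃⟩⟩
    exact ⟨(y₁, -y₂, y₃), ⟨hy₁, neg_mem hy₂, hy₃⟩, by simp_all only [tot_d_apply,
      LinearMap.zero_apply, map_neg, zero_sub, neg_neg, sub_zero, neg_zero, Nat.bodd_succ,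
      Bool.not_not]⟩

lemma isSubquotient_tot_of_eq_zero (hf : ∀ p, f p = 0) (hg : ∀ p, g p = 0) {m : ℕ}
    (hC : IsSubquotient (C.cocycles (m + 2)) (C.coboundaries (m + 2)) T)
    (hD : IsSubquotient (D.cocycles (m + 1)) (D.coboundaries (m + 1)) U)
    (hE : IsSubquotient (E.cocycles m) (E.coboundaries m) W) :
    IsSubquotient ((tot f g h).cocycles (m + 2)) ((tot f g h).coboundaries (m + 2))
      (T × U × W) := by
  rw [cocycles_tot_of_eq_zero hf hg, coboundaries_tot_of_eq_zero hf hg]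
  exact hC.prod (hD.prod hE)

end tot

open CategoryTheory in
theorem nonempty_homology_equiv_of_isSubquotient (C : PeriodicComplex k X) (n : ℕ)
    (h : IsSubquotient (C.cocycles (n + 2)) (C.coboundaries (n + 2)) T) :
    Nonempty (C.toCochainComplex.homology (n + 1) ≃ₗ[k] T) := by
  obtain ⟨φ, hφ, ker⟩ := h
  let S := C.shortComplex n
  have mem (z : LinearMap.ker S.g.hom) : (z.1 : C.F (n + 2)).1 ∈ C.cocycles (n + 2) := by
    refine ⟨z.1.2, ?_⟩
    have hz : C.d (n + 1).bodd z.1.1 = 0 := congrArg Subtype.val z.2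
    simpa using hz
  let ψ : LinearMap.ker S.g.hom →ₗ[k] T := φ ∘ₗ
    ((C.F (n + 2)).subtype ∘ₗ (LinearMap.ker S.g.hom).subtype).codRestrict (C.cocycles (n + 2)) mem
  have ker_eq : LinearMap.range S.moduleCatToCycles = LinearMap.ker ψ := by
    ext z
    refine Iff.trans ?_ (ker ⟨_, mem z⟩).symm
    constructor
    · rintro ⟨y, rfl⟩
      refine ⟨(y : C.F (n + 1)).1, y.2, ?_⟩
      rw [Nat.bodd_succ, Nat.bodd_succ, Bool.not_not]
      rfl
    · rintro ⟨y, hy, hyz⟩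
      refine ⟨(⟨y, hy⟩ : C.F (n + 1)), Subtype.ext (Subtype.ext ?_)⟩
      rwa [Nat.bodd_succ, Nat.bodd_succ, Bool.not_not] at hyz
  have surjective : Function.Surjective ψ := by
    intro t
    obtain ⟨z, rfl⟩ := hφ t
    refine ⟨⟨(⟨z.1, z.2.1⟩ : C.F (n + 2)), Subtype.ext ?_⟩, rfl⟩
    change C.d (n + 1).bodd z = 0
    simpa using (mem_cocycles.1 z.2).2
  exact ⟨(C.toCochainComplex.homologyIsoSc' n (n + 1) (n + 2) (by simp) (by simp) ≪≫
      ShortComplex.homologyMapIso (eqToIso (C.toCochainComplex_sc' n)) ≪≫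
      S.moduleCatHomologyIso).toLinearEquiv ≪≫ₗ
    Submodule.quotEquivOfEq _ _ ker_eq ≪≫ₗ ψ.quotKerEquivOfSurjective surjective⟩

end PeriodicComplex

end IsSubquotient

section CyclicComplex

variable {k V W U : Type*} [CommRing k] [AddCommGroup V] [Module k V]
  [AddCommGroup W] [Module k W] [AddCommGroup U] [Module k U]

/-- The standard complex `V ⟶ V ⟶ V ⟶ ⋯` computing the cohomology of a cyclic group of order `n`
whose generator acts on `V` by `ξ`: the differentials are alternately `ξ - 1` and the norm. -/
def cyclicComplex (n : ℕ) (ξ : Module.End k V) (hξ : ξ ^ n = 1) : PeriodicComplex k V where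
  d p := bif p then ∑ i ∈ Finset.range n, ξ ^ i else ξ - 1
  F
    | 0 => ⊥
    | _ + 1 => ⊤
  d_d p x := by
    have norm_mul : (∑ i ∈ Finset.range n, ξ ^ i) * (ξ - 1) = 0 := by
      rw [geom_sum_mul, hξ, sub_self]
    have mul_norm : (ξ - 1) * ∑ i ∈ Finset.range n, ξ ^ i = 0 := by
      rw [mul_geom_sum, hξ, sub_self]
    cases p
    · exact LinearMap.congr_fun norm_mul x
    · exact LinearMap.congr_fun mul_norm x
  F_zero := rfl
  d_mem _ := Submodule.mem_top

variable {n : ℕ} {ξ : Module.End k V} {hξ : ξ ^ n = 1} {η : Module.End k W} {hη : η ^ n = 1}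
  {ζ : Module.End k U} {hζ : ζ ^ n = 1}

lemma cyclicComplex_d_false (x : V) : (cyclicComplex n ξ hξ).d false x = ξ x - x := rfl

lemma cyclicComplex_d_true (x : V) :
    (cyclicComplex n ξ hξ).d true x = ∑ i ∈ Finset.range n, (ξ ^ i) x :=
  LinearMap.sum_apply (Finset.range n) (fun i => ξ ^ i) x

@[simp]
lemma mem_cyclicComplex_F_zero {x : V} : x ∈ (cyclicComplex n ξ hξ).F 0 ↔ x = 0 :=
  Submodule.mem_bot k

@[simp]
lemma mem_cyclicComplex_F_succ (m : ℕ) (x : V) : x ∈ (cyclicComplex n ξ hξ).F (m + 1) :=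
  Submodule.mem_top

/-- The morphism of standard complexes induced by an equivariant linear map. -/
def cyclicComplexMap (f : V →ₗ[k] W) (hf : ∀ x, f (ξ x) = η (f x)) :
    (cyclicComplex n ξ hξ).Hom (cyclicComplex n η hη) where
  toFun _ := f
  comm p x := by
    have pow (i : ℕ) : f ((ξ ^ i) x) = (η ^ i) (f x) := by
      induction i with
      | zero => rfl
      | succ i ih => rw [pow_succ', pow_succ', Module.End.mul_apply, hf, ih, Module.End.mul_apply]
    cases p
    · simp [cyclicComplex_d_false, hf]
    · simp [cyclicComplex_d_true, pow]
  map_mem {_ m x} hx := by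
    cases m
    · rw [mem_cyclicComplex_F_zero] at hx ⊢
      rw [hx, map_zero]
    · simp

@[simp]
lemma cyclicComplexMap_apply (f : V →ₗ[k] W) (hf : ∀ x, f (ξ x) = η (f x)) (p : Bool) :
    cyclicComplexMap (hξ := hξ) (hη := hη) f hf p = f := rfl

lemma cyclicComplexMap_exact {f : V →ₗ[k] W} {hf : ∀ x, f (ξ x) = η (f x)} {g : W →ₗ[k] U}
    {hg : ∀ y, g (η y) = ζ (g y)} (exact : Function.Exact f g) :
    (cyclicComplexMap (hξ := hξ) (hη := hη) f hf).Exact (cyclicComplexMap (hη := hζ) g hg) := by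
  rintro p (_ | m) y hy
  · rw [mem_cyclicComplex_F_zero] at hy
    exact ⟨fun _ => ⟨0, zero_mem _, by simp [hy]⟩, fun _ => by simp [hy]⟩
  · simpa using exact y

lemma cyclicComplexMap_surjective {f : V →ₗ[k] W} {hf : ∀ x, f (ξ x) = η (f x)}
    (surjective : Function.Surjective f) :
    (cyclicComplexMap (hξ := hξ) (hη := hη) f hf).Surjective := by
  rintro p (_ | m) y hy
  · rw [mem_cyclicComplex_F_zero] at hy
    exact ⟨0, zero_mem _, by simp [hy]⟩
  · simpa using surjective y

-- The projections `P i` decompose `V` as an induced module, on which both Tate cohomology groups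
-- of the cyclic group vanish.
section Induced

variable {P : ℕ → Module.End k V}

lemma norm_apply_of_sum_eq_one (P_succ : ∀ i x, P (i + 1) (ξ x) = ξ (P i x))
    (P_sum : ∑ i ∈ Finset.range n, P i = 1) {x : V} (hx : ξ x = x) :
    ∑ i ∈ Finset.range n, (ξ ^ i) (P 0 x) = x := by
  have shift (i : ℕ) : (ξ ^ i) (P 0 x) = P i x := by
    induction i with
    | zero => rfl
    | succ i ih => rw [pow_succ', Module.End.mul_apply, ih, ← P_succ, hx]
  simpa [shift] using LinearMap.congr_fun P_sum x

lemma sub_apply_of_sum_eq_one (P_succ : ∀ i x, P (i + 1) (ξ x) = ξ (P i x))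
    (P_period : P n = P 0) (P_sum : ∑ i ∈ Finset.range n, P i = 1) {x : V}
    (hx : ∑ i ∈ Finset.range n, (ξ ^ i) x = 0) {y : V}
    (hy : y = -∑ i ∈ Finset.range n, P i (∑ j ∈ Finset.range i, (ξ ^ j) x)) : ξ y - y = x := by
  let R (i : ℕ) : V := ∑ j ∈ Finset.range i, (ξ ^ j) x
  have R_succ (i : ℕ) : ξ (R i) = R (i + 1) - x := by
    simp [R, Finset.sum_range_succ', ← Module.End.mul_apply, ← pow_succ']
  have sum_succ :
      ∑ i ∈ Finset.range n, P (i + 1) (R (i + 1)) = ∑ i ∈ Finset.range n, P i (R i) := by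
    have := (Finset.sum_range_succ' (fun i => P i (R i)) n).symm.trans (Finset.sum_range_succ _ n)
    simpa [R, hx] using this
  have sum_succ_apply : ∑ i ∈ Finset.range n, P (i + 1) x = x := by
    have := (Finset.sum_range_succ' (fun i => P i x) n).symm.trans (Finset.sum_range_succ _ n)
    rw [P_period, add_left_inj] at this
    exact this.trans ((LinearMap.sum_apply _ P x).symm.trans (LinearMap.congr_fun P_sum x))
  calc ξ y - y = -∑ i ∈ Finset.range n, P (i + 1) (ξ (R i)) + ∑ i ∈ Finset.range n, P i (R i) := by
        simp [hy, R, P_succ]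
    _ = x := by simp [R_succ, sum_succ, sum_succ_apply]

end Induced

end CyclicComplex

lemma exact_prodMap {X Y Z X' Y' Z' : Type*} [Zero Z] [Zero Z'] {f : X → Y} {g : Y → Z}
    {f' : X' → Y'} {g' : Y' → Z'} (exact : Function.Exact f g) (exact' : Function.Exact f' g') :
    Function.Exact (Prod.map f f') (Prod.map g g') := by
  rintro ⟨y, y'⟩
  rw [Set.range_prodMap, Set.mem_prod, ← exact y, ← exact' y']
  exact Prod.mk_eq_zero

section Koszul

variable {k V : Type*} [CommRing k] [AddCommGroup V] [Module k V]

/-- The first map `V ⟶ V × V` of the Koszul complex of `a - 1` and `b - 1`. -/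
def koszulFst (a b : V →ₗ[k] V) : V →ₗ[k] V × V :=
  (a - LinearMap.id).prod (b - LinearMap.id)

/-- The second map `V × V ⟶ V` of the Koszul complex of `a - 1` and `b - 1`. -/
def koszulSnd (a b : V →ₗ[k] V) : V × V →ₗ[k] V :=
  (b - LinearMap.id) ∘ₗ LinearMap.fst k V V - (a - LinearMap.id) ∘ₗ LinearMap.snd k V V

variable {a b : V →ₗ[k] V}

@[simp]
lemma koszulFst_apply (y : V) : koszulFst a b y = (a y - y, b y - y) := rfl

@[simp]
lemma koszulSnd_apply (y : V × V) :
    koszulSnd a b y = b y.1 - y.1 - (a y.2 - y.2) := rfl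

lemma koszulSnd_koszulFst (comm : ∀ y, b (a y) = a (b y)) (y : V) :
    koszulSnd a b (koszulFst a b y) = 0 := by
  simp only [koszulFst_apply, koszulSnd_apply, map_sub, comm]
  abel

lemma koszulSnd_surjective (ha : ∀ y, ∃ z, a z - z = y) :
    Function.Surjective (koszulSnd a b) := by
  intro y
  obtain ⟨z, hz⟩ := ha (-y)
  exact ⟨(0, z), by simp [hz]⟩

lemma koszul_exact (comm : ∀ y, b (a y) = a (b y)) (ha : ∀ y, ∃ z, a z - z = y)
    (hb : ∀ y, a y = y → ∃ z, a z = z ∧ b z - z = y) :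
    Function.Exact (koszulFst a b) (koszulSnd a b) := by
  rintro ⟨y₁, y₂⟩
  refine ⟨fun hy => ?_, fun ⟨z, hz⟩ => hz ▸ koszulSnd_koszulFst comm z⟩
  obtain ⟨z, rfl⟩ := ha y₁
  obtain ⟨z', hz', hbz'⟩ := hb (y₂ - (b z - z)) (by
    simp only [koszulSnd_apply, map_sub, comm] at hy ⊢
    grind)
  refine ⟨z + z', Prod.ext ?_ ?_⟩
  · simp [hz']
  · change b (z + z') - (z + z') = y₂
    rw [map_add, add_sub_add_comm, hbz', add_sub_cancel]

section map

variable {W : Type*} [AddCommGroup W] [Module k W] {a' b' : W →ₗ[k] W} {f : V →ₗ[k] W}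

lemma map_koszulFst (ha : ∀ y, f (a y) = a' (f y)) (hb : ∀ y, f (b y) = b' (f y)) (y : V) :
    f.prodMap f (koszulFst a b y) = koszulFst a' b' (f y) := by
  simp [ha, hb]

lemma map_koszulSnd (ha : ∀ y, f (a y) = a' (f y)) (hb : ∀ y, f (b y) = b' (f y)) (y : V × V) :
    f (koszulSnd a b y) = koszulSnd a' b' (f.prodMap f y) := by
  simp [ha, hb]

end map

end Koszul

section I4

/-- An action on `V` of the symmorphic space group `I4`, that is of the semidirect product of the
body-centred tetragonal lattice with the cyclic group of order four: `x` is the rotation, `u` and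
`v` span the sublattice on which `x` acts as multiplication by `i` on `ℤ[i]`, and `t` is a
translation with `x⁻¹ t x = v t`. -/
structure I4Action (k V : Type*) [CommRing k] [AddCommGroup V] [Module k V] where
  (x u v t : V ≃ₗ[k] V)
  x_pow : x ^ 4 = 1
  v_mul_x : v * x = x * u
  u_mul_x : u * x = x * v⁻¹
  t_mul_x : t * x = x * v * t
  v_mul_u : v * u = u * v
  t_mul_u : t * u = u * t
  t_mul_v : t * v = v * t

namespace I4Action

variable {k V W U : Type*} [CommRing k] [AddCommGroup V] [Module k V]
  [AddCommGroup W] [Module k W] [AddCommGroup U] [Module k U]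
  (O : I4Action k V) {Q : I4Action k W} {R : I4Action k U}

@[simp]
lemma x_x_x_x (a : V) : O.x (O.x (O.x (O.x a))) = a := LinearEquiv.congr_fun O.x_pow a

@[simp]
lemma v_x (a : V) : O.v (O.x a) = O.x (O.u a) := LinearEquiv.congr_fun O.v_mul_x a

@[simp]
lemma u_x (a : V) : O.u (O.x a) = O.x (O.v.symm a) := LinearEquiv.congr_fun O.u_mul_x a

@[simp]
lemma t_x (a : V) : O.t (O.x a) = O.x (O.v (O.t a)) := LinearEquiv.congr_fun O.t_mul_x a

@[simp]
lemma v_u (a : V) : O.v (O.u a) = O.u (O.v a) := LinearEquiv.congr_fun O.v_mul_u a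

@[simp]
lemma t_u (a : V) : O.t (O.u a) = O.u (O.t a) := LinearEquiv.congr_fun O.t_mul_u a

@[simp]
lemma t_v (a : V) : O.t (O.v a) = O.v (O.t a) := LinearEquiv.congr_fun O.t_mul_v a

@[simp]
lemma u_symm_x (a : V) : O.u.symm (O.x a) = O.x (O.v a) := by
  rw [LinearEquiv.symm_apply_eq, u_x, LinearEquiv.symm_apply_apply]

@[simp]
lemma v_symm_x (a : V) : O.v.symm (O.x a) = O.x (O.u.symm a) := by
  rw [LinearEquiv.symm_apply_eq, v_x, LinearEquiv.apply_symm_apply]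

@[simp]
lemma v_symm_u (a : V) : O.v.symm (O.u a) = O.u (O.v.symm a) := by
  rw [LinearEquiv.symm_apply_eq, v_u, LinearEquiv.apply_symm_apply]

@[simp]
lemma t_v_symm (a : V) : O.t (O.v.symm a) = O.v.symm (O.t a) := by
  rw [LinearEquiv.eq_symm_apply, ← t_v, LinearEquiv.apply_symm_apply]

@[simp]
lemma t_u_symm (a : V) : O.t (O.u.symm a) = O.u.symm (O.t a) := by
  rw [LinearEquiv.eq_symm_apply, ← t_u, LinearEquiv.apply_symm_apply]

@[simp]
lemma v_u_symm (a : V) : O.v (O.u.symm a) = O.u.symm (O.v a) := by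
  rw [LinearEquiv.eq_symm_apply, ← v_u, LinearEquiv.apply_symm_apply]

/-- The action of the rotation on the first column of `p4Complex`. -/
def rotation : Module.End k V := O.x

/-- The action of the rotation on the middle column of `p4Complex`. -/
def rotationPair : Module.End k (V × V) :=
  (-((O.x : V →ₗ[k] V) ∘ₗ (O.v.symm : V →ₗ[k] V) ∘ₗ LinearMap.snd k V V)).prod
    ((O.x : V →ₗ[k] V) ∘ₗ LinearMap.fst k V V)

/-- The action of the rotation on the last column of `p4Complex`. -/
def rotationTwo : Module.End k V := (O.x : V →ₗ[k] V) ∘ₗ (O.v.symm : V →ₗ[k] V)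

@[simp]
lemma rotation_apply (a : V) : O.rotation a = O.x a := rfl

@[simp]
lemma rotationPair_apply (a : V × V) :
    O.rotationPair a = (-O.x (O.v.symm a.2), O.x a.1) := rfl

@[simp]
lemma rotationTwo_apply (a : V) : O.rotationTwo a = O.x (O.v.symm a) := rfl

lemma rotation_pow : O.rotation ^ 4 = 1 := LinearMap.ext O.x_x_x_x

lemma rotationPair_pow : O.rotationPair ^ 4 = 1 := by
  refine LinearMap.ext fun a => ?_
  simp [pow_succ]

lemma rotationTwo_pow : O.rotationTwo ^ 4 = 1 := by
  refine LinearMap.ext fun a => ?_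
  simp [pow_succ]

/-- The first horizontal morphism of `p4Complex`. -/
def p4Fst : (cyclicComplex 4 O.rotation O.rotation_pow).Hom
    (cyclicComplex 4 O.rotationPair O.rotationPair_pow) :=
  cyclicComplexMap (koszulFst O.u O.v) fun a => by simp

/-- The second horizontal morphism of `p4Complex`. -/
def p4Snd : (cyclicComplex 4 O.rotationPair O.rotationPair_pow).Hom
    (cyclicComplex 4 O.rotationTwo O.rotationTwo_pow) :=
  cyclicComplexMap (koszulSnd O.u O.v) fun a => by
    simp only [rotationPair_apply, rotationTwo_apply, koszulSnd_apply, LinearEquiv.coe_coe, map_neg,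
      map_sub, v_x, u_x, v_symm_u, LinearEquiv.symm_apply_apply, sub_neg_eq_add]
    abel

lemma p4Snd_p4Fst (p : Bool) (a : V) : O.p4Snd p (O.p4Fst p a) = 0 :=
  koszulSnd_koszulFst O.v_u a

/-- The complex computing the cohomology of the planar space group `p4 = ⟨u, v⟩ ⋊ ⟨x⟩`: the total
complex of the double complex whose rows are Koszul complexes of `⟨u, v⟩` and whose columns are
standard complexes of `⟨x⟩`. -/
def p4Complex : PeriodicComplex k (V × (V × V) × V) := .tot O.p4Fst O.p4Snd O.p4Snd_p4Fst

lemma p4Complex_d_false (a b c e : V) : O.p4Complex.d false (a, (b, c), e) =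
    (O.x a - a,
      (O.u a - a - (b - O.x (O.v.symm c) - O.x (O.x (O.u.symm b)) + O.x (O.x (O.x c))),
        O.v a - a - (c + O.x b - O.x (O.x (O.v.symm c)) - O.x (O.x (O.x (O.u.symm b))))),
      O.x (O.v.symm e) - e - (O.v b - b - (O.u c - c))) := by
  simp [p4Complex, p4Fst, p4Snd, cyclicComplex_d_false, cyclicComplex_d_true,
    Finset.sum_range_succ, pow_succ, sub_eq_add_neg]

lemma p4Complex_d_true (a b c e : V) : O.p4Complex.d true (a, (b, c), e) =
    (a + O.x a + O.x (O.x a) + O.x (O.x (O.x a)),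
      (O.u a - a - (-O.x (O.v.symm c) - b), O.v a - a - (O.x b - c)),
      e + O.x (O.v.symm e) + O.x (O.x (O.u.symm (O.v.symm e))) + O.x (O.x (O.x (O.u.symm e)))
        - (O.v b - b - (O.u c - c))) := by
  simp [p4Complex, p4Fst, p4Snd, cyclicComplex_d_false, cyclicComplex_d_true,
    Finset.sum_range_succ, pow_succ]

/-- The action of `t` on the even cochains of `p4Complex`. Acting by `t` on each copy of `V`
commutes with the Koszul differentials but, since `x⁻¹ t x = v t`, not with the rotations; the
terms lowering the column index correct this. -/
def p4TranslationEven : V × (V × V) × V →ₗ[k] V × (V × V) × V where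
  toFun
    | (a, (b, c), e) => (O.t a - (O.x (O.t c) + O.x (O.x (O.u (O.t c))) + O.x (O.x (O.t b))
      + O.x (O.x (O.x (O.t b)))) + O.x (O.x (O.t e)), (O.t b, O.t c - O.x (O.t e)), O.t e)
  map_add' := by
    rintro ⟨a, ⟨b, c⟩, e⟩ ⟨a', ⟨b', c'⟩, e'⟩
    ext <;> simp only [Prod.mk_add_mk, map_add] <;> abel
  map_smul' r y := by simp [smul_sub]

/-- The action of `t` on the odd cochains of `p4Complex`. -/
def p4TranslationOdd : V × (V × V) × V →ₗ[k] V × (V × V) × V where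
  toFun
    | (a, (b, c), e) => (O.t a - O.x (O.t c) + O.x (O.x (O.t e)),
      (O.t b + O.x (O.x (O.t e)) + O.x (O.x (O.x (O.t e))),
        O.t c - O.x (O.t e) - O.x (O.x (O.v.symm (O.t e)))), O.t e)
  map_add' := by
    rintro ⟨a, ⟨b, c⟩, e⟩ ⟨a', ⟨b', c'⟩, e'⟩
    ext <;> simp only [Prod.mk_add_mk, map_add] <;> abel
  map_smul' r y := by simp [smul_sub]

lemma p4TranslationEven_apply (a b c e : V) : O.p4TranslationEven (a, (b, c), e) =
    (O.t a - (O.x (O.t c) + O.x (O.x (O.u (O.t c))) + O.x (O.x (O.t b))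
      + O.x (O.x (O.x (O.t b)))) + O.x (O.x (O.t e)), (O.t b, O.t c - O.x (O.t e)), O.t e) := rfl

lemma p4TranslationOdd_apply (a b c e : V) : O.p4TranslationOdd (a, (b, c), e) =
    (O.t a - O.x (O.t c) + O.x (O.x (O.t e)),
      (O.t b + O.x (O.x (O.t e)) + O.x (O.x (O.x (O.t e))),
        O.t c - O.x (O.t e) - O.x (O.x (O.v.symm (O.t e)))), O.t e) := rfl

lemma p4TranslationOdd_d (y : V × (V × V) × V) :
    O.p4TranslationOdd (O.p4Complex.d false y) = O.p4Complex.d false (O.p4TranslationEven y) := by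
  obtain ⟨a, ⟨b, c⟩, e⟩ := y
  simp only [p4Complex_d_false, p4TranslationEven_apply, p4TranslationOdd_apply, map_add, map_sub,
    t_x, t_v, t_v_symm, LinearEquiv.apply_symm_apply, v_x, t_u_symm, v_u_symm, u_x,
    LinearEquiv.symm_apply_apply, x_x_x_x, t_u, v_symm_u, v_symm_x, u_symm_x, Prod.mk.injEq]
  refine ⟨?_, ⟨?_, ?_⟩, ?_⟩ <;> abel

lemma p4TranslationEven_d (y : V × (V × V) × V) :
    O.p4TranslationEven (O.p4Complex.d true y) = O.p4Complex.d true (O.p4TranslationOdd y) := by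
  obtain ⟨a, ⟨b, c⟩, e⟩ := y
  simp only [p4Complex_d_true, p4TranslationEven_apply, p4TranslationOdd_apply, map_add, map_sub,
    map_neg, t_x, t_v, t_v_symm, LinearEquiv.apply_symm_apply, v_x, t_u_symm, v_u_symm, u_x,
    LinearEquiv.symm_apply_apply, x_x_x_x, t_u, v_symm_u, v_symm_x, u_symm_x, neg_sub,
    Prod.mk.injEq]
  refine ⟨?_, ⟨?_, ?_⟩, ?_⟩ <;> abel

/-- The morphism `t - 1` of `p4Complex`. -/
def p4TranslationSubOne : O.p4Complex.Hom O.p4Complex where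
  toFun p := (bif p then O.p4TranslationOdd else O.p4TranslationEven) - LinearMap.id
  comm p y := by
    cases p
    · simp [p4TranslationOdd_d]
    · simp [p4TranslationEven_d]
  map_mem {p m y} hy := by
    refine sub_mem ?_ hy
    obtain ⟨a, ⟨b, c⟩, e⟩ := y
    rcases m with _ | _ | _ | m <;> cases p <;>
      simp_all [p4Complex, PeriodicComplex.mem_tot_F, p4TranslationEven_apply,
        p4TranslationOdd_apply]

/-- The complex computing the cohomology of `I4`, which is an extension of `⟨t⟩ ≅ ℤ` by `p4`. -/
def i4Complex : PeriodicComplex k ((V × (V × V) × V) × V × (V × V) × V) :=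
  .fiber O.p4TranslationSubOne

/-- A linear map commuting with the operators of two actions of `I4`. -/
structure Equivariant (O : I4Action k V) (Q : I4Action k W) (f : V →ₗ[k] W) : Prop where
  x (a : V) : f (O.x a) = Q.x (f a)
  u (a : V) : f (O.u a) = Q.u (f a)
  v (a : V) : f (O.v a) = Q.v (f a)
  t (a : V) : f (O.t a) = Q.t (f a)

namespace Equivariant

variable {O} {f : V →ₗ[k] W} {g : W →ₗ[k] U} (hf : O.Equivariant Q f) (hg : Q.Equivariant R g)

lemma v_symm (hf : O.Equivariant Q f) (a : V) : f (O.v.symm a) = Q.v.symm (f a) := by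
  rw [LinearEquiv.eq_symm_apply, ← hf.v, LinearEquiv.apply_symm_apply]

/-- The morphism of `p4` complexes induced by an equivariant map. -/
def p4Map : O.p4Complex.Hom Q.p4Complex :=
  PeriodicComplex.totMap (cyclicComplexMap f hf.x)
    (cyclicComplexMap (f.prodMap f) fun a => by simp [hf.x, hf.v_symm])
    (cyclicComplexMap f fun a => by simp [hf.x, hf.v_symm])
    (fun _ => map_koszulFst hf.u hf.v) (fun _ => map_koszulSnd hf.u hf.v)

lemma p4Map_apply (p : Bool) (y : V × (V × V) × V) :
    hf.p4Map p y = (f y.1, f.prodMap f y.2.1, f y.2.2) := PeriodicComplex.totMap_apply ..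

/-- The morphism of `I4` complexes induced by an equivariant map. -/
def i4Map : O.i4Complex.Hom Q.i4Complex :=
  PeriodicComplex.fiberMap hf.p4Map hf.p4Map fun p y => by
    obtain ⟨a, ⟨b, c⟩, e⟩ := y
    cases p <;> simp [p4TranslationSubOne, p4TranslationEven_apply, p4TranslationOdd_apply,
      p4Map_apply, hf.x, hf.u, hf.t, hf.v_symm]

lemma i4Map_apply (p : Bool) (y : (V × (V × V) × V) × V × (V × V) × V) :
    hf.i4Map p y = (hf.p4Map p y.1, hf.p4Map (!p) y.2) := rfl

lemma p4Map_exact (exact : Function.Exact f g) : hf.p4Map.Exact hg.p4Map :=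
  PeriodicComplex.totMap_exact (cyclicComplexMap_exact exact)
    (cyclicComplexMap_exact (exact_prodMap exact exact)) (cyclicComplexMap_exact exact)

lemma i4Map_exact (exact : Function.Exact f g) : hf.i4Map.Exact hg.i4Map :=
  PeriodicComplex.fiberMap_exact (hf.p4Map_exact hg exact) (hf.p4Map_exact hg exact)

lemma p4Map_surjective (surjective : Function.Surjective f) : hf.p4Map.Surjective :=
  PeriodicComplex.totMap_surjective (cyclicComplexMap_surjective surjective)
    (cyclicComplexMap_surjective (surjective.prodMap surjective))
    (cyclicComplexMap_surjective surjective)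

lemma i4Map_surjective (surjective : Function.Surjective f) : hf.i4Map.Surjective :=
  PeriodicComplex.fiberMap_surjective (hf.p4Map_surjective surjective)
    (hf.p4Map_surjective surjective)

end Equivariant

end I4Action

end I4

section I4Acyclic

namespace I4Action

open PeriodicComplex

variable {k V : Type*} [CommRing k] [AddCommGroup V] [Module k V] {O : I4Action k V}

lemma mem_p4Complex_F_one {y : V × (V × V) × V} :
    y ∈ O.p4Complex.F 1 ↔ ∃ a, y = (a, 0, 0) := by
  constructor
  · rintro ⟨-, h₁, h₂⟩
    exact ⟨y.1, Prod.ext rfl (Prod.ext h₁ h₂)⟩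
  · rintro ⟨a, rfl⟩
    exact ⟨trivial, rfl, rfl⟩

lemma p4Complex_d_false_inl_eq_zero {a : V} :
    O.p4Complex.d false (a, 0, 0) = 0 ↔ O.x a = a ∧ O.u a = a ∧ O.v a = a := by
  refine (Eq.congr_left (O.p4Complex_d_false a 0 0 0)).trans ?_
  simp [sub_eq_zero]

theorem p4Complex_acyclic (hu : ∀ a, ∃ c, O.u c - c = a)
    (hv : ∀ a, O.u a = a → ∃ c, O.u c = c ∧ O.v c - c = a)
    (x_norm : ∀ a, O.u a = a → O.v a = a → O.x a = a →
      ∃ c, (O.u c = c ∧ O.v c = c) ∧ ∑ i ∈ Finset.range 4, (O.rotation ^ i) c = a)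
    (x_sub : ∀ a, O.u a = a → O.v a = a → ∑ i ∈ Finset.range 4, (O.rotation ^ i) a = 0 →
      ∃ c, (O.u c = c ∧ O.v c = c) ∧ O.x c - c = a) : O.p4Complex.Acyclic := by
  refine tot_acyclic _ (fun n a _ ha hda => ?_)
    (cyclicComplexMap_exact (koszul_exact O.v_u hu hv))
    (cyclicComplexMap_surjective (koszulSnd_surjective hu))
  have fixed (b : V) (p : Bool) : O.p4Fst p b = 0 ↔ O.u b = b ∧ O.v b = b := by
    simp [p4Fst, sub_eq_zero]
  simp only [fixed] at ha ⊢
  cases hn : n.bodd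
  · rw [hn] at hda
    obtain ⟨c, hc, rfl⟩ := x_sub a ha.1 ha.2 ((cyclicComplex_d_true a).symm.trans hda)
    exact ⟨c, trivial, hc, rfl⟩
  · rw [hn] at hda
    obtain ⟨c, hc, rfl⟩ := x_norm a ha.1 ha.2 (sub_eq_zero.1 hda)
    exact ⟨c, trivial, hc, cyclicComplex_d_true c⟩

theorem i4Complex_acyclic (p4_acyclic : O.p4Complex.Acyclic)
    (ht : ∀ a, O.x a = a → O.u a = a → O.v a = a →
      ∃ c, (O.x c = c ∧ O.u c = c ∧ O.v c = c) ∧ O.t c - c = a) : O.i4Complex.Acyclic := by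
  refine fiber_acyclic p4_acyclic p4_acyclic fun y hy hdy => ?_
  obtain ⟨a, rfl⟩ := mem_p4Complex_F_one.1 hy
  obtain ⟨hx, hu, hv⟩ := p4Complex_d_false_inl_eq_zero.1 hdy
  obtain ⟨c, hc, rfl⟩ := ht a hx hu hv
  refine ⟨(c, 0, 0), mem_p4Complex_F_one.2 ⟨c, rfl⟩, p4Complex_d_false_inl_eq_zero.2 hc, ?_⟩
  refine (congrArg (· - (c, 0, 0)) (O.p4TranslationEven_apply c 0 0 0)).trans ?_
  simp

end I4Action

end I4Acyclic

section CrysAction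

lemma map_ker_eq_of_comm {k V W : Type*} [CommRing k] [AddCommGroup V] [Module k V]
    [AddCommGroup W] [Module k W] {φ : V →ₗ[k] W} {w : V ≃ₗ[k] V} {w' : W ≃ₗ[k] W}
    (h : ∀ a, φ (w a) = w' (φ a)) :
    (LinearMap.ker φ).map (w : V →ₗ[k] V) = LinearMap.ker φ := by
  rw [Submodule.map_equiv_eq_comap_symm]
  ext a
  have := h (w.symm a)
  rw [LinearEquiv.apply_symm_apply] at this
  simp [this]

namespace I4Action

variable {k V W U W' : Type*} [CommRing k] [AddCommGroup V] [Module k V]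
  [AddCommGroup W] [Module k W] [AddCommGroup U] [Module k U] [AddCommGroup W'] [Module k W']
  {O : I4Action k V} {Q : I4Action k W} {R : I4Action k U} {Q' : I4Action k W'}

namespace Equivariant

variable {f : V →ₗ[k] W} {g : W →ₗ[k] U} {f' : V →ₗ[k] W'} {g' : W' →ₗ[k] U}
  (hf : O.Equivariant Q f) (hg : Q.Equivariant R g)
  (hf' : O.Equivariant Q' f') (hg' : Q'.Equivariant R g')

lemma i4Map_i4Map_eq_zero (h : ∀ a, g (f a) = 0) (p : Bool)
    (y : (V × (V × V) × V) × V × (V × V) × V) : hg.i4Map p (hf.i4Map p y) = 0 := by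
  simp [i4Map_apply, p4Map_apply, h]

lemma i4Map_i4Map_congr (h : ∀ a, g (f a) = g' (f' a)) (p : Bool)
    (y : (V × (V × V) × V) × V × (V × V) × V) :
    hg.i4Map p (hf.i4Map p y) = hg'.i4Map p (hf'.i4Map p y) := by
  simp [i4Map_apply, p4Map_apply, h]

lemma i4Map_injective (injective : Function.Injective f) (p : Bool) :
    Function.Injective (hf.i4Map p) := by
  have p4Map_injective (p : Bool) : Function.Injective (hf.p4Map p) := by
    have : ⇑(hf.p4Map p) = Prod.map f (Prod.map (Prod.map f f) f) :=
      funext fun y => hf.p4Map_apply p y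
    rw [this]
    exact injective.prodMap ((injective.prodMap injective).prodMap injective)
  exact (p4Map_injective p).prodMap (p4Map_injective !p)

end Equivariant

variable (O)

/-- The diagonal action on `V × V` in which the rotation also exchanges the two factors. -/
def swap : I4Action k (V × V) where
  x := LinearEquiv.prodComm k V V ≪≫ₗ O.x.prodCongr O.x
  u := O.u.prodCongr O.u
  v := O.v.prodCongr O.v
  t := O.t.prodCongr O.t
  x_pow := LinearEquiv.ext fun a => Prod.ext (O.x_x_x_x a.1) (O.x_x_x_x a.2)
  v_mul_x := LinearEquiv.ext fun a => Prod.ext (O.v_x a.2) (O.v_x a.1)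
  u_mul_x := LinearEquiv.ext fun a => Prod.ext (O.u_x a.2) (O.u_x a.1)
  t_mul_x := LinearEquiv.ext fun a => Prod.ext (O.t_x a.2) (O.t_x a.1)
  v_mul_u := LinearEquiv.ext fun a => Prod.ext (O.v_u a.1) (O.v_u a.2)
  t_mul_u := LinearEquiv.ext fun a => Prod.ext (O.t_u a.1) (O.t_u a.2)
  t_mul_v := LinearEquiv.ext fun a => Prod.ext (O.t_v a.1) (O.t_v a.2)

/-- The action on `V` in which the rotation acts with an additional sign. -/
def sign : I4Action k V where
  x := O.x ≪≫ₗ LinearEquiv.neg k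
  u := O.u
  v := O.v
  t := O.t
  x_pow := LinearEquiv.ext fun a => by simp [pow_succ]
  v_mul_x := LinearEquiv.ext fun a => by simp
  u_mul_x := LinearEquiv.ext fun a => by simp
  t_mul_x := LinearEquiv.ext fun a => by simp
  v_mul_u := O.v_mul_u
  t_mul_u := O.t_mul_u
  t_mul_v := O.t_mul_v

@[simp]
lemma swap_x_apply (a : V × V) : O.swap.x a = (O.x a.2, O.x a.1) := rfl

@[simp]
lemma sign_x_apply (a : V) : O.sign.x a = -O.x a := rfl

@[simp]
lemma swap_u_apply (a : V × V) : O.swap.u a = (O.u a.1, O.u a.2) := rfl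

@[simp]
lemma swap_v_apply (a : V × V) : O.swap.v a = (O.v a.1, O.v a.2) := rfl

@[simp]
lemma swap_t_apply (a : V × V) : O.swap.t a = (O.t a.1, O.t a.2) := rfl

@[simp]
lemma sign_u : O.sign.u = O.u := rfl

@[simp]
lemma sign_v : O.sign.v = O.v := rfl

@[simp]
lemma sign_t : O.sign.t = O.t := rfl

variable {O}

/-- The restriction of an action to the kernel of an equivariant map. -/
def Equivariant.ker {φ : V →ₗ[k] W} (hφ : O.Equivariant Q φ) :
    I4Action k (LinearMap.ker φ) where
  x := O.x.ofSubmodules _ _ (map_ker_eq_of_comm hφ.x)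
  u := O.u.ofSubmodules _ _ (map_ker_eq_of_comm hφ.u)
  v := O.v.ofSubmodules _ _ (map_ker_eq_of_comm hφ.v)
  t := O.t.ofSubmodules _ _ (map_ker_eq_of_comm hφ.t)
  x_pow := LinearEquiv.ext fun a => Subtype.ext (O.x_x_x_x a)
  v_mul_x := LinearEquiv.ext fun a => Subtype.ext (O.v_x a)
  u_mul_x := LinearEquiv.ext fun a => Subtype.ext (O.u_x a)
  t_mul_x := LinearEquiv.ext fun a => Subtype.ext (O.t_x a)
  v_mul_u := LinearEquiv.ext fun a => Subtype.ext (O.v_u a)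
  t_mul_u := LinearEquiv.ext fun a => Subtype.ext (O.t_u a)
  t_mul_v := LinearEquiv.ext fun a => Subtype.ext (O.t_v a)

lemma Equivariant.subtype_ker {φ : V →ₗ[k] W} (hφ : O.Equivariant Q φ) :
    hφ.ker.Equivariant O (LinearMap.ker φ).subtype where
  x _ := rfl
  u _ := rfl
  v _ := rfl
  t _ := rfl

end I4Action

/-- An action on `V` of `ℤ⁵ ⋊ ℤ/4`, generated by `I4` and two further commuting translations `e` and
`f` exchanged by the rotation. -/
structure CrysAction (k V : Type*) [CommRing k] [AddCommGroup V] [Module k V] extends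
    I4Action k V where
  (e f : V ≃ₗ[k] V)
  e_mul_x : e * x = x * f
  f_mul_x : f * x = x * e
  e_mul_u : e * u = u * e
  e_mul_v : e * v = v * e
  e_mul_t : e * t = t * e
  f_mul_u : f * u = u * f
  f_mul_v : f * v = v * f
  f_mul_t : f * t = t * f
  f_mul_e : f * e = e * f

namespace CrysAction

variable {k V W U : Type*} [CommRing k] [AddCommGroup V] [Module k V]
  [AddCommGroup W] [Module k W] [AddCommGroup U] [Module k U]
  (O : CrysAction k V) {Q : CrysAction k W} {R : CrysAction k U}

@[simp]
lemma e_x (a : V) : O.e (O.x a) = O.x (O.f a) := LinearEquiv.congr_fun O.e_mul_x a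

@[simp]
lemma f_x (a : V) : O.f (O.x a) = O.x (O.e a) := LinearEquiv.congr_fun O.f_mul_x a

@[simp]
lemma e_u (a : V) : O.e (O.u a) = O.u (O.e a) := LinearEquiv.congr_fun O.e_mul_u a

@[simp]
lemma e_v (a : V) : O.e (O.v a) = O.v (O.e a) := LinearEquiv.congr_fun O.e_mul_v a

@[simp]
lemma e_t (a : V) : O.e (O.t a) = O.t (O.e a) := LinearEquiv.congr_fun O.e_mul_t a

@[simp]
lemma f_u (a : V) : O.f (O.u a) = O.u (O.f a) := LinearEquiv.congr_fun O.f_mul_u a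

@[simp]
lemma f_v (a : V) : O.f (O.v a) = O.v (O.f a) := LinearEquiv.congr_fun O.f_mul_v a

@[simp]
lemma f_t (a : V) : O.f (O.t a) = O.t (O.f a) := LinearEquiv.congr_fun O.f_mul_t a

lemma f_e (a : V) : O.f (O.e a) = O.e (O.f a) := LinearEquiv.congr_fun O.f_mul_e a

lemma equivariant_koszulFst :
    O.toI4Action.Equivariant O.swap (koszulFst (O.e : V →ₗ[k] V) (O.f : V →ₗ[k] V)) := by
  constructor <;> simp

lemma equivariant_koszulSnd :
    O.swap.Equivariant O.sign (koszulSnd (O.e : V →ₗ[k] V) (O.f : V →ₗ[k] V)) := by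
  constructor <;> simp

lemma koszulSnd_i4Map_koszulFst_i4Map (p : Bool) (y : (V × (V × V) × V) × V × (V × V) × V) :
    O.equivariant_koszulSnd.i4Map p (O.equivariant_koszulFst.i4Map p y) = 0 :=
  O.equivariant_koszulFst.i4Map_i4Map_eq_zero O.equivariant_koszulSnd
    (koszulSnd_koszulFst O.f_e) p y

/-- The type of cochains of `CrysAction.complex`. -/
abbrev Cochains (V : Type*) : Type _ :=
  ((V × (V × V) × V) × V × (V × V) × V) ×
    (((V × V) × ((V × V) × V × V) × V × V) × (V × V) × ((V × V) × V × V) × V × V) ×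
      (V × (V × V) × V) × V × (V × V) × V

/-- The complex computing the cohomology of `ℤ⁵ ⋊ ℤ/4`: the total complex of the `I4` complexes of
the terms of the Koszul complex of `⟨e, f⟩`. -/
def complex : PeriodicComplex k (Cochains V) :=
  .tot O.equivariant_koszulFst.i4Map O.equivariant_koszulSnd.i4Map
    O.koszulSnd_i4Map_koszulFst_i4Map

/-- A linear map commuting with the operators of two actions of `ℤ⁵ ⋊ ℤ/4`. -/
structure Equivariant (O : CrysAction k V) (Q : CrysAction k W) (φ : V →ₗ[k] W) : Prop extends
    O.toI4Action.Equivariant Q.toI4Action φ where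
  e (a : V) : φ (O.e a) = Q.e (φ a)
  f (a : V) : φ (O.f a) = Q.f (φ a)

namespace Equivariant

variable {O} {φ : V →ₗ[k] W} {ψ : W →ₗ[k] U} (hφ : O.Equivariant Q φ) (hψ : Q.Equivariant R ψ)

lemma swap (hφ : O.Equivariant Q φ) : O.swap.Equivariant Q.swap (φ.prodMap φ) := by
  constructor <;> simp [hφ.x, hφ.u, hφ.v, hφ.t]

lemma sign (hφ : O.Equivariant Q φ) : O.sign.Equivariant Q.sign φ := by
  constructor <;> simp [hφ.x, hφ.u, hφ.v, hφ.t]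

/-- The morphism of complexes induced by an equivariant map. -/
def complexMap : O.complex.Hom Q.complex :=
  PeriodicComplex.totMap hφ.i4Map hφ.swap.i4Map hφ.sign.i4Map
    (I4Action.Equivariant.i4Map_i4Map_congr _ _ _ _ (map_koszulFst hφ.e hφ.f))
    (I4Action.Equivariant.i4Map_i4Map_congr _ _ _ _ (map_koszulSnd hφ.e hφ.f))

lemma complexMap_apply (p : Bool) (y : Cochains V) :
    hφ.complexMap p y = (hφ.i4Map p y.1, hφ.swap.i4Map (!p) y.2.1, hφ.sign.i4Map p y.2.2) :=
  PeriodicComplex.totMap_apply ..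

lemma complexMap_exact (exact : Function.Exact φ ψ) : hφ.complexMap.Exact hψ.complexMap :=
  PeriodicComplex.totMap_exact (hφ.i4Map_exact _ exact)
    (hφ.swap.i4Map_exact _ (exact_prodMap exact exact)) (hφ.sign.i4Map_exact _ exact)

lemma complexMap_surjective (surjective : Function.Surjective φ) : hφ.complexMap.Surjective :=
  PeriodicComplex.totMap_surjective (hφ.i4Map_surjective surjective)
    (hφ.swap.i4Map_surjective (surjective.prodMap surjective))
    (hφ.sign.i4Map_surjective surjective)

lemma complexMap_injective (injective : Function.Injective φ) (p : Bool) :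
    Function.Injective (hφ.complexMap p) := by
  have : ⇑(hφ.complexMap p) =
      Prod.map (hφ.i4Map p) (Prod.map (hφ.swap.i4Map (!p)) (hφ.sign.i4Map p)) :=
    funext fun y => hφ.complexMap_apply p y
  rw [this]
  exact (hφ.i4Map_injective injective p).prodMap
    ((hφ.swap.i4Map_injective (injective.prodMap injective) !p).prodMap
      (hφ.sign.i4Map_injective injective p))

end Equivariant

theorem complex_acyclic (he : ∀ a, ∃ c, O.e c - c = a)
    (hf : ∀ a, O.e a = a → ∃ c, O.e c = c ∧ O.f c - c = a)
    (ker_acyclic : O.equivariant_koszulFst.ker.i4Complex.Acyclic) : O.complex.Acyclic := by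
  have i4_exact := O.equivariant_koszulFst.subtype_ker.i4Map_exact O.equivariant_koszulFst
    (LinearMap.exact_subtype_ker_map _)
  refine PeriodicComplex.tot_acyclic _ (PeriodicComplex.ker_acyclic_of_exact ker_acyclic
    (O.equivariant_koszulFst.subtype_ker.i4Map_injective Subtype.val_injective) i4_exact)
    (O.equivariant_koszulFst.i4Map_exact _ (koszul_exact O.f_e he hf))
    (O.equivariant_koszulSnd.i4Map_surjective (koszulSnd_surjective he))

end CrysAction

end CrysAction

section Antidifference

/-- The sum of the values of `F` from `0` to `n - 1`, with the usual convention for negative `n`. -/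
def intSum {V : Type*} [AddCommGroup V] (F : ℤ → V) : ℤ → V
  | (n : ℕ) => ∑ i ∈ Finset.range n, F i
  | Int.negSucc n => -∑ i ∈ Finset.range (n + 1), F (-(i + 1))

lemma intSum_add_one {V : Type*} [AddCommGroup V] (F : ℤ → V) (n : ℤ) :
    intSum F (n + 1) = intSum F n + F n := by
  rcases n with n | n | n
  · exact Finset.sum_range_succ (fun i : ℕ => F i) n
  · simp [intSum]
  · change -∑ i ∈ Finset.range (n + 1), F (-(i + 1)) =
      -∑ i ∈ Finset.range (n + 1 + 1), F (-(i + 1)) + F (Int.negSucc (n + 1))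
    rw [Finset.sum_range_succ _ (n + 1), Int.negSucc_eq]
    simp

variable {G V : Type*} [Group G]

/-- The subgroup of right periods of a function on a group. -/
def periods (b : G → V) : Subgroup G where
  carrier := {h | ∀ g, b (g * h) = b g}
  one_mem' := by simp
  mul_mem' {h h'} hh hh' g := by rw [← mul_assoc, hh', hh]
  inv_mem' {h} hh g := by rw [← hh, inv_mul_cancel_right]

lemma mem_periods {b : G → V} {h : G} : h ∈ periods b ↔ ∀ g, b (g * h) = b g := Iff.rfl

theorem exists_antidifference [AddCommGroup V] {w : G} {ℓ : G → ℤ}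
    (hℓ : ∀ g, ℓ (g * w) = ℓ g + 1) (b : G → V) :
    ∃ c : G → V, (∀ g, c (g * w) - c g = b g) ∧
      ∀ h ∈ periods ℓ, (∀ n : ℤ, w ^ (-n) * h * w ^ n ∈ periods b) → h ∈ periods c := by
  refine ⟨fun g => intSum (fun n => b (g * w ^ (n - ℓ g))) (ℓ g), fun g => ?_, fun h hh hb g => ?_⟩
  · have shift (n : ℤ) : g * w * w ^ (n - (ℓ g + 1)) = g * w ^ (n - ℓ g) := by
      rw [mul_assoc, ← _root_.zpow_one_add]
      congr 2
      ring
    simp [hℓ, shift, intSum_add_one]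
  · have conj (n : ℤ) : g * h * w ^ (n - ℓ g) =
        g * w ^ (n - ℓ g) * (w ^ (-(n - ℓ g)) * h * w ^ (n - ℓ g)) := by group
    simp only [mem_periods.1 hh, conj, mem_periods.1 (hb _)]

end Antidifference

section HolGroup

/-- The group `ℤ⁵ ⋊ ℤ/4`. -/
abbrev HolGroup : Type := Crystal.Crys 4 holM holM_pow

namespace HolGroup

/-- The element of the lattice `ℤ⁵` with coordinates `w`. -/
def translation (w : Fin 5 → ℤ) : HolGroup := SemidirectProduct.inl (Multiplicative.ofAdd w)

/-- The generator of `ℤ/4`. -/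
def x : HolGroup := SemidirectProduct.inr (Multiplicative.ofAdd 1)

-- A basis of the lattice in which the action of `x` takes the form required of a `CrysAction`.

/-- The lattice generator acting as `I4Action.u`. -/
def u : HolGroup := translation ![0, -1, 0, -1, 0]

/-- The lattice generator acting as `I4Action.v`. -/
def v : HolGroup := translation ![-1, 1, 0, 0, 0]

/-- The lattice generator acting as `I4Action.t`. -/
def t : HolGroup := translation ![1, 0, 0, 0, 0]

/-- The lattice generator acting as `CrysAction.e`. -/
def e : HolGroup := translation ![0, 0, 1, 0, 0]

/-- The lattice generator acting as `CrysAction.f`. -/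
def f : HolGroup := translation ![0, 0, 0, 0, -1]

lemma matAction_one (w : Fin 5 → ℤ) :
    Crystal.matAction 4 holM holM_pow (Multiplicative.ofAdd 1) (Multiplicative.ofAdd w) =
      Multiplicative.ofAdd (holM *ᵥ w) :=
  DFunLike.congr_fun (pow_one (Crystal.glToAut 5 (Crystal.matUnit holM 3 holM_pow))) _

lemma translation_mul (w w' : Fin 5 → ℤ) :
    translation w * translation w' = translation (w + w') :=
  (map_mul SemidirectProduct.inl _ _).symm

lemma translation_comm (w w' : Fin 5 → ℤ) :
    translation w * translation w' = translation w' * translation w := by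
  rw [translation_mul, translation_mul, add_comm]

lemma translation_zpow (w : Fin 5 → ℤ) (n : ℤ) : translation w ^ n = translation (n • w) :=
  (map_zpow SemidirectProduct.inl _ n).symm

lemma x_mul_translation (w : Fin 5 → ℤ) : x * translation w = translation (holM *ᵥ w) * x := by
  rw [translation, translation, x, ← matAction_one, SemidirectProduct.inl_aut]
  simp

lemma x_pow : x ^ 4 = 1 :=
  (map_pow SemidirectProduct.inr (Multiplicative.ofAdd (1 : ZMod 4)) 4).symm

lemma v_mul_x : v * x = x * u := by
  rw [u, v, x_mul_translation]
  congr 2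
  decide

lemma u_mul_x : u * x = x * v⁻¹ := by
  rw [u, v, ← _root_.zpow_neg_one, translation_zpow, x_mul_translation]
  congr 2
  decide

lemma t_mul_x : t * x = x * v * t := by
  rw [t, v, mul_assoc, translation_mul, x_mul_translation]
  congr 2
  decide

lemma e_mul_x : e * x = x * f := by
  rw [e, f, x_mul_translation]
  congr 2
  decide

lemma f_mul_x : f * x = x * e := by
  rw [e, f, x_mul_translation]
  congr 2
  decide

/-- The coordinates of `w` in the normal form `g = x ^ i * translation w`. -/
def coord (g : HolGroup) : Fin 5 → ℤ :=
  Multiplicative.toAdd (Crystal.matAction 4 holM holM_pow g.right⁻¹ g.left)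

/-- The projection to `ℤ/4`. -/
def proj (g : HolGroup) : ZMod 4 := Multiplicative.toAdd g.right

@[simp]
lemma coord_mul_translation (g : HolGroup) (w : Fin 5 → ℤ) :
    coord (g * translation w) = coord g + w := by
  simp [coord, translation]

lemma holM_mulVec_coord_mul_x (g : HolGroup) : holM *ᵥ coord (g * x) = coord g := by
  apply Multiplicative.ofAdd.injective
  rw [← matAction_one]
  simp [coord, x]

@[simp]
lemma proj_mul_translation (g : HolGroup) (w : Fin 5 → ℤ) :
    proj (g * translation w) = proj g := by
  simp [translation, proj]

lemma proj_mul_x (g : HolGroup) : proj (g * x) = proj g + 1 := by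
  simp [x, proj]

lemma eq_x_pow_mul_translation (g : HolGroup) :
    g = x ^ (proj g).val * translation (coord g) := by
  have x_pow_val : x ^ (proj g).val = SemidirectProduct.inr g.right := by
    rw [x, ← map_pow, ← ofAdd_nsmul]
    simp [proj]
  rw [x_pow_val]
  ext <;> simp [translation, coord]

/-- The exponent of `u` in the normal form of `g`. -/
def uCoord (g : HolGroup) : ℤ := -coord g 3

/-- The exponent of `v` in the normal form of `g`. -/
def vCoord (g : HolGroup) : ℤ := coord g 1 - coord g 3

/-- The exponent of `t` in the normal form of `g`. -/
def tCoord (g : HolGroup) : ℤ := coord g 0 + coord g 1 - coord g 3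

/-- The exponent of `e` in the normal form of `g`. -/
def eCoord (g : HolGroup) : ℤ := coord g 2

/-- The exponent of `f` in the normal form of `g`. -/
def fCoord (g : HolGroup) : ℤ := -coord g 4

lemma tCoord_mul_translation (g : HolGroup) (w : Fin 5 → ℤ) :
    tCoord (g * translation w) = tCoord g + (w 0 + w 1 - w 3) := by
  simp only [tCoord, coord_mul_translation, Pi.add_apply]
  ring

lemma tCoord_mul_x (g : HolGroup) : tCoord (g * x) = tCoord g := by
  rw [tCoord, tCoord, ← holM_mulVec_coord_mul_x g]
  generalize coord (g * x) = w
  have holM_mulVec : holM *ᵥ w = ![w 0 + w 1, -w 0 - w 3, -w 4, -w 0, -w 2] := by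
    ext i
    fin_cases i <;> simp [holM, Matrix.mulVec, dotProduct, Fin.sum_univ_succ, sub_eq_add_neg]
  rw [holM_mulVec]
  change w 0 + w 1 - w 3 = w 0 + w 1 + (-w 0 - w 3) - -w 0
  ring

lemma translation_coord (g : HolGroup) : translation (coord g) =
    t ^ tCoord g * u ^ uCoord g * v ^ vCoord g * e ^ eCoord g * f ^ fCoord g := by
  simp only [t, u, v, e, f, translation_zpow, translation_mul]
  congr 1
  ext i
  fin_cases i <;> simp [tCoord, uCoord, vCoord, eCoord, fCoord]

lemma mem_of_generators_mem {S : Subgroup HolGroup} (hx : x ∈ S) (hu : u ∈ S) (hv : v ∈ S)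
    (ht : t ∈ S) (he : e ∈ S) (hf : f ∈ S) (g : HolGroup) : g ∈ S := by
  rw [eq_x_pow_mul_translation g, translation_coord]
  exact mul_mem (pow_mem hx _) (mul_mem (mul_mem (mul_mem (mul_mem (zpow_mem ht _)
    (zpow_mem hu _)) (zpow_mem hv _)) (zpow_mem he _)) (zpow_mem hf _))

variable {k V W : Type*} [CommRing k] [AddCommGroup V] [Module k V] [AddCommGroup W] [Module k W]

/-- The operators by which the generators of `ℤ⁵ ⋊ ℤ/4` act in a representation. -/
def operators (ρ : Representation k HolGroup V) : CrysAction k V :=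
  let τ : HolGroup →* (V ≃ₗ[k] V) :=
    (LinearMap.GeneralLinearGroup.generalLinearEquiv k V).toMonoidHom.comp ρ.asGroupHom
  { x := τ x
    u := τ u
    v := τ v
    t := τ t
    e := τ e
    f := τ f
    x_pow := by rw [← map_pow, HolGroup.x_pow, map_one]
    v_mul_x := by simp only [← map_mul, HolGroup.v_mul_x]
    u_mul_x := by simp only [← map_mul, ← map_inv, HolGroup.u_mul_x]
    t_mul_x := by simp only [← map_mul, HolGroup.t_mul_x]
    e_mul_x := by simp only [← map_mul, HolGroup.e_mul_x]
    f_mul_x := by simp only [← map_mul, HolGroup.f_mul_x]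
    v_mul_u := by simp only [← map_mul, u, v, translation_comm]
    t_mul_u := by simp only [← map_mul, t, u, translation_comm]
    t_mul_v := by simp only [← map_mul, t, v, translation_comm]
    e_mul_u := by simp only [← map_mul, e, u, translation_comm]
    e_mul_v := by simp only [← map_mul, e, v, translation_comm]
    e_mul_t := by simp only [← map_mul, e, t, translation_comm]
    f_mul_u := by simp only [← map_mul, f, u, translation_comm]
    f_mul_v := by simp only [← map_mul, f, v, translation_comm]
    f_mul_t := by simp only [← map_mul, f, t, translation_comm]
    f_mul_e := by simp only [← map_mul, f, e, translation_comm] }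

lemma equivariant_operators {ρ : Representation k HolGroup V}
    {σ : Representation k HolGroup W} {φ : V →ₗ[k] W} (hφ : ∀ g a, φ (ρ g a) = σ g (φ a)) :
    (operators ρ).Equivariant (operators σ) φ where
  x := hφ x
  u := hφ u
  v := hφ v
  t := hφ t
  e := hφ e
  f := hφ f

end HolGroup

end HolGroup

section StandardComplex

open CategoryTheory

namespace CrysAction

variable {k V W U : Type*} [CommRing k] [AddCommGroup V] [Module k V] [AddCommGroup W] [Module k W]
  [AddCommGroup U] [Module k U] {O : CrysAction k V} {Q : CrysAction k W} {R : CrysAction k U}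

lemma mem_complex_F_one {y : Cochains V} :
    y ∈ O.complex.F 1 ↔ ∃ a, y = (((a, 0, 0), 0), 0) := by
  constructor
  · rintro ⟨⟨h₁, h₂⟩, h₃, h₄⟩
    obtain ⟨a, ha⟩ := I4Action.mem_p4Complex_F_one.1 h₁
    have h₂ : y.1.2 = 0 := by simpa [PeriodicComplex.F_zero] using h₂
    have h₃ : y.2.1 = 0 := by simpa [PeriodicComplex.F_zero] using h₃
    have h₄ : y.2.2 = 0 := by simpa [PeriodicComplex.F_zero] using h₄
    exact ⟨a, Prod.ext (Prod.ext ha h₂) (Prod.ext h₃ h₄)⟩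
  · rintro ⟨a, rfl⟩
    exact ⟨⟨I4Action.mem_p4Complex_F_one.2 ⟨a, rfl⟩, zero_mem _⟩, zero_mem _⟩

lemma complex_d_false_inl_eq_zero {a : V} :
    O.complex.d false (((a, 0, 0), 0), 0) = 0 ↔
      O.x a = a ∧ O.u a = a ∧ O.v a = a ∧ O.t a = a ∧ O.e a = a ∧ O.f a = a := by
  have p4Translation : O.p4TranslationSubOne false (a, 0, 0) = (O.t a - a, 0, 0) := by
    refine (congrArg (· - (a, 0, 0)) (O.p4TranslationEven_apply a 0 0 0)).trans ?_
    simp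
  refine (Eq.congr_left (PeriodicComplex.tot_d_apply ..)).trans ?_
  simp [I4Action.i4Complex, p4Translation,
    I4Action.p4Complex_d_false_inl_eq_zero, I4Action.Equivariant.i4Map_apply,
    I4Action.Equivariant.p4Map_apply, sub_eq_zero, and_assoc]

lemma Equivariant.complexMap_inl {φ : V →ₗ[k] W} (hφ : O.Equivariant Q φ) (p : Bool) (a : V) :
    hφ.complexMap p (((a, 0, 0), 0), 0) = (((φ a, 0, 0), 0), 0) := by
  simp [complexMap_apply, I4Action.Equivariant.i4Map_apply, I4Action.Equivariant.p4Map_apply]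

lemma Equivariant.complexMap_id_apply (hφ : O.Equivariant O LinearMap.id) (p : Bool)
    (y : Cochains V) : hφ.complexMap p y = y := by
  simp [complexMap_apply, I4Action.Equivariant.i4Map_apply, I4Action.Equivariant.p4Map_apply]

lemma Equivariant.complexMap_comp_apply {φ : V →ₗ[k] W} {ψ : W →ₗ[k] U} (hφ : O.Equivariant Q φ)
    (hψ : Q.Equivariant R ψ) (hψφ : O.Equivariant R (ψ ∘ₗ φ)) (p : Bool) (y : Cochains V) :
    hψφ.complexMap p y = hψ.complexMap p (hφ.complexMap p y) := by
  simp [complexMap_apply, I4Action.Equivariant.i4Map_apply, I4Action.Equivariant.p4Map_apply]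

lemma Equivariant.complexMap_zero_apply (hφ : O.Equivariant Q 0) (p : Bool) (y : Cochains V) :
    hφ.complexMap p y = 0 := by
  simp [complexMap_apply, I4Action.Equivariant.i4Map_apply, I4Action.Equivariant.p4Map_apply]

end CrysAction

namespace HolGroup

variable {k : Type} [CommRing k]

lemma forall_apply_eq_iff {V : Type*} [AddCommGroup V] [Module k V]
    {ρ : Representation k HolGroup V} {a : V} : (∀ g, ρ g a = a) ↔
      ρ x a = a ∧ ρ u a = a ∧ ρ v a = a ∧ ρ t a = a ∧ ρ e a = a ∧ ρ f a = a := by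
  let : MulAction HolGroup V := MulAction.compHom V ρ
  refine ⟨fun h => ⟨h x, h u, h v, h t, h e, h f⟩, fun ⟨hx, hu, hv, ht, he, hf⟩ => ?_⟩
  exact mem_of_generators_mem (S := MulAction.stabilizer HolGroup a) hx hu hv ht he hf

variable (k) in
/-- The functor sending a representation to its complex `CrysAction.complex`. -/
noncomputable def cochainsFunctor : Rep.{0} k HolGroup ⥤ CochainComplex (ModuleCat.{0} k) ℕ where
  obj A := (operators A.ρ).complex.toCochainComplex
  map φ := (equivariant_operators (φ := φ.hom.toLinearMap)
    (Rep.hom_comm_apply φ)).complexMap.toCochainComplexMap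
  map_id A := by
    refine HomologicalComplex.hom_ext _ _ fun n => ModuleCat.hom_ext (LinearMap.ext fun y => ?_)
    exact Subtype.ext (CrysAction.Equivariant.complexMap_id_apply
      (equivariant_operators fun _ _ => rfl) n.bodd y.1)
  map_comp φ ψ := by
    refine HomologicalComplex.hom_ext _ _ fun n => ModuleCat.hom_ext (LinearMap.ext fun y => ?_)
    exact Subtype.ext (CrysAction.Equivariant.complexMap_comp_apply
      (equivariant_operators (Rep.hom_comm_apply φ)) (equivariant_operators (Rep.hom_comm_apply ψ))
      (equivariant_operators (Rep.hom_comm_apply (φ ≫ ψ))) n.bodd y.1)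

instance : (cochainsFunctor k).PreservesZeroMorphisms where
  map_zero A B := by
    refine HomologicalComplex.hom_ext _ _ fun n => ModuleCat.hom_ext (LinearMap.ext fun y => ?_)
    exact Subtype.ext (CrysAction.Equivariant.complexMap_zero_apply
      (equivariant_operators fun g _ => (map_zero (B.ρ g)).symm) n.bodd y.1)

lemma cochainsFunctor_shortExact {S : ShortComplex (Rep k HolGroup)} (hS : S.ShortExact) :
    (S.map (cochainsFunctor k)).ShortExact := by
  have := hS.mono_f
  have := hS.epi_g
  refine PeriodicComplex.toCochainComplexMap_shortExact _
    (CrysAction.Equivariant.complexMap_injective _ ((Rep.mono_iff_injective S.f).1 ‹_›))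
    (CrysAction.Equivariant.complexMap_exact _ _ ?_)
    (CrysAction.Equivariant.complexMap_surjective _ ((Rep.epi_iff_surjective S.g).1 ‹_›))
  exact (ShortComplex.ShortExact.moduleCat_exact_iff_function_exact _).1
    (hS.exact.map (forget₂ (Rep k HolGroup) (ModuleCat k)))

/-- The inclusion of the invariants into the cochains of degree zero. -/
def invariantsInclusion {V : Type*} [AddCommGroup V] [Module k V]
    (ρ : Representation k HolGroup V) : ρ.invariants →ₗ[k] (operators ρ).complex.F 1 where
  toFun a := ⟨(((a, 0, 0), 0), 0), CrysAction.mem_complex_F_one.2 ⟨a, rfl⟩⟩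
  map_add' _ _ := by ext <;> simp
  map_smul' _ _ := by ext <;> simp

lemma exact_invariantsInclusion {V : Type*} [AddCommGroup V] [Module k V]
    (ρ : Representation k HolGroup V) :
    Function.Exact (invariantsInclusion ρ) ((operators ρ).complex.dRestrict 0) := by
  rintro ⟨y, hy⟩
  obtain ⟨a, rfl⟩ := CrysAction.mem_complex_F_one.1 hy
  refine Subtype.ext_iff.trans (CrysAction.complex_d_false_inl_eq_zero.trans ?_)
  refine forall_apply_eq_iff.symm.trans ⟨fun ha => ⟨⟨a, ha⟩, rfl⟩, ?_⟩
  rintro ⟨b, hb⟩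
  obtain rfl : (b : V) = a := congrArg (fun y => y.1.1.1.1) hb
  exact b.2

end HolGroup

end StandardComplex

section Comparison

open CategoryTheory

namespace HolGroup

variable {k : Type} [CommRing k]

lemma exact_invariantsInclusion_d (A : Rep k HolGroup) :
    Function.Exact (invariantsInclusion A.ρ) (((cochainsFunctor k).obj A).d 0 1).hom := by
  have := exact_invariantsInclusion A.ρ
  change Function.Exact _ ((operators A.ρ).complex.toCochainComplex.d 0 1).hom
  rw [PeriodicComplex.toCochainComplex_d]
  exact this

lemma invariantsInclusion_comp_d (A : Rep k HolGroup) :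
    ModuleCat.ofHom (invariantsInclusion A.ρ) ≫ ((cochainsFunctor k).obj A).d 0 1 = 0 :=
  ModuleCat.hom_ext (LinearMap.ext (exact_invariantsInclusion_d A).apply_apply_eq_zero)

/-- The invariants are the kernel of the first differential. -/
noncomputable def isKernelInvariantsInclusion (A : Rep k HolGroup) :
    Limits.IsLimit (Limits.KernelFork.ofι (ModuleCat.ofHom (invariantsInclusion A.ρ))
      (invariantsInclusion_comp_d A)) :=
  have : Mono (ModuleCat.ofHom (invariantsInclusion A.ρ)) :=
    (ModuleCat.mono_iff_injective _).2 fun _ _ hab =>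
      Subtype.ext (congrArg (fun y => y.1.1.1.1) hab)
  ShortComplex.Exact.fIsKernel (S := .mk _ _ (invariantsInclusion_comp_d A))
    ((ShortComplex.ShortExact.moduleCat_exact_iff_function_exact _).2
      (exact_invariantsInclusion_d A))

variable (k) in
/-- The cohomology in degree zero of the complex of a representation is its module of
invariants. -/
noncomputable def invariantsIsoHomologyZero : Rep.invariantsFunctor k HolGroup ≅
    cochainsFunctor k ⋙ HomologicalComplex.homologyFunctor _ _ 0 :=
  homologyZeroIsoOfIsKernel _ _ _ _ isKernelInvariantsInclusion fun φ =>
    ModuleCat.hom_ext <| LinearMap.ext fun a => Subtype.ext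
      (CrysAction.Equivariant.complexMap_inl (equivariant_operators (Rep.hom_comm_apply φ)) false
        a.1).symm

end HolGroup

end Comparison

section CoinducedAcyclic

namespace I4Action

variable {k V : Type*} [CommRing k] [AddCommGroup V] [Module k V] {O : I4Action k V}

lemma u_x_eq_and_v_x_eq {a : V} (ha : O.u a = a ∧ O.v a = a) :
    O.u (O.x a) = O.x a ∧ O.v (O.x a) = O.x a := by
  rw [u_x, v_x, ha.1, (LinearEquiv.symm_apply_eq _).2 ha.2.symm]
  exact ⟨rfl, rfl⟩

theorem p4Complex_acyclic_of_sum_eq_one (hu : ∀ a, ∃ c, O.u c - c = a)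
    (hv : ∀ a, O.u a = a → ∃ c, O.u c = c ∧ O.v c - c = a) {P : ℕ → Module.End k V}
    (P_u : ∀ i a, P i (O.u a) = O.u (P i a)) (P_v : ∀ i a, P i (O.v a) = O.v (P i a))
    (P_x : ∀ i a, P (i + 1) (O.x a) = O.x (P i a)) (P_period : P 4 = P 0)
    (P_sum : ∑ i ∈ Finset.range 4, P i = 1) : O.p4Complex.Acyclic := by
  let L : Submodule k V :=
    LinearMap.eqLocus (O.u : V →ₗ[k] V) .id ⊓ LinearMap.eqLocus (O.v : V →ₗ[k] V) .id
  have P_mem (i : ℕ) {a : V} (ha : a ∈ L) : P i a ∈ L :=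
    ⟨(P_u i a).symm.trans (congrArg _ ha.1), (P_v i a).symm.trans (congrArg _ ha.2)⟩
  have x_pow_mem (i : ℕ) {a : V} (ha : a ∈ L) : (O.rotation ^ i) a ∈ L :=
    Module.End.pow_apply_mem_of_forall_mem _ (fun _ => u_x_eq_and_v_x_eq) a ha
  refine p4Complex_acyclic hu hv (fun a hua hva hxa => ?_) (fun a hua hva ha => ?_)
  · exact ⟨P 0 a, P_mem 0 ⟨hua, hva⟩, norm_apply_of_sum_eq_one P_x P_sum hxa⟩
  · exact ⟨_, neg_mem (sum_mem fun i _ => P_mem i (sum_mem fun j _ => x_pow_mem j ⟨hua, hva⟩)),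
      sub_apply_of_sum_eq_one P_x P_period P_sum ha rfl⟩

end I4Action

namespace HolGroup

lemma translation_conj (w w' : Fin 5 → ℤ) (n : ℤ) :
    translation w ^ (-n) * translation w' * translation w ^ n = translation w' := by
  have comm : Commute (translation w') (translation w) := translation_comm _ _
  rw [← (comm.zpow_right (-n)).eq, mul_assoc, ← _root_.zpow_add, neg_add_cancel, zpow_zero, mul_one]

lemma exists_translation_sub {V : Type*} [AddCommGroup V] {w : Fin 5 → ℤ} {ℓ : HolGroup → ℤ}
    (hℓ : ∀ g, ℓ (g * translation w) = ℓ g + 1) (b : HolGroup → V) :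
    ∃ c : HolGroup → V, (∀ g, c (g * translation w) - c g = b g) ∧
      ∀ w', translation w' ∈ periods ℓ → translation w' ∈ periods b →
        translation w' ∈ periods c := by
  obtain ⟨c, hc, hperiods⟩ := exists_antidifference hℓ b
  exact ⟨c, hc, fun w' hw' hb => hperiods _ hw' fun n => (translation_conj w w' n).symm ▸ hb⟩

lemma t_zpow_neg_mul_x_mul_t_zpow (n : ℤ) : t ^ (-n) * x * t ^ n = x * v ^ (-n) := by
  have semiconj : SemiconjBy x (v * t) t := by rw [SemiconjBy, t_mul_x, mul_assoc]
  have hvt : Commute v t := translation_comm _ _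
  rw [← (semiconj.zpow_right (-n)).eq, hvt.mul_zpow]
  group

lemma exists_t_sub {V : Type*} [AddCommGroup V] {b : HolGroup → V} (hx : x ∈ periods b)
    (hv : v ∈ periods b) :
    ∃ c : HolGroup → V, (∀ g, c (g * t) - c g = b g) ∧ x ∈ periods c ∧
      ∀ w', translation w' ∈ periods tCoord → translation w' ∈ periods b →
        translation w' ∈ periods c := by
  obtain ⟨c, hc, hperiods⟩ :=
    exists_antidifference (w := t) (ℓ := tCoord) (by simp [t, tCoord_mul_translation]) b
  refine ⟨c, hc, hperiods x tCoord_mul_x fun n => ?_,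
    fun w' hw' hb => hperiods _ hw' fun n => (translation_conj _ w' n).symm ▸ hb⟩
  rw [t_zpow_neg_mul_x_mul_t_zpow]
  exact mul_mem hx (zpow_mem hv _)

variable (k V : Type*) [CommRing k] [AddCommGroup V] [Module k V]

/-- Multiplication by the indicator function of a fibre of the projection to `ℤ/4`. -/
def restrictFiber (i : ZMod 4) : Module.End k (HolGroup → V) where
  toFun b g := if proj g = i then b g else 0
  map_add' b c := by ext; simp [ite_add_zero]
  map_smul' r b := by ext; simp

variable {k V}

@[simp]
lemma restrictFiber_apply (i : ZMod 4) (b : HolGroup → V) (g : HolGroup) :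
    restrictFiber k V i b g = if proj g = i then b g else 0 := rfl

lemma sum_restrictFiber (b : HolGroup → V) :
    ∑ i ∈ Finset.range 4, restrictFiber k V (-i) b = b := by
  ext g
  have proj_cases : ∀ j : ZMod 4, j = 0 ∨ j = -1 ∨ j = -2 ∨ j = -3 := by decide
  simp only [Finset.sum_apply, restrictFiber_apply, Finset.sum_range_succ, Finset.sum_range_zero,
    Nat.cast_zero, Nat.cast_one, Nat.cast_ofNat]
  obtain h | h | h | h := proj_cases (proj g) <;> simp +decide only [h, if_true, if_false,
    zero_add, add_zero]

lemma translation_mem_periods_restrictFiber {b : HolGroup → V} {w : Fin 5 → ℤ}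
    (hb : translation w ∈ periods b) (i : ZMod 4) :
    translation w ∈ periods (restrictFiber k V i b) := fun g => by
  simp [mem_periods.1 hb]

variable {k V : Type} [CommRing k] [AddCommGroup V] [Module k V]

/-- The functions on the group with periods `e` and `f`, as an action of `I4`. -/
abbrev coinducedKer (k V : Type) [CommRing k] [AddCommGroup V] [Module k V] :=
  (operators (rightTranslation k HolGroup V)).equivariant_koszulFst.ker

lemma mem_ker_koszulFst {b : HolGroup → V} :
    b ∈ LinearMap.ker (koszulFst ((operators (rightTranslation k HolGroup V)).e : _ →ₗ[k] _)
      ((operators (rightTranslation k HolGroup V)).f : _ →ₗ[k] _)) ↔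
      e ∈ periods b ∧ f ∈ periods b := by
  rw [LinearMap.mem_ker, koszulFst_apply, Prod.mk_eq_zero, sub_eq_zero, sub_eq_zero, funext_iff,
    funext_iff]
  rfl

lemma coinducedKer_exists_u_sub (b) : ∃ c, (coinducedKer k V).u c - c = b := by
  obtain ⟨b, hb⟩ := b
  obtain ⟨he, hf⟩ := mem_ker_koszulFst.1 hb
  obtain ⟨c, hc, hperiods⟩ := exists_translation_sub (ℓ := uCoord) (w := ![0, -1, 0, -1, 0])
    (fun g => by simp [uCoord, add_comm]) b
  have hc' := (mem_ker_koszulFst (k := k)).2 ⟨hperiods _ (fun g => by simp [uCoord]) he,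
    hperiods _ (fun g => by simp [uCoord]) hf⟩
  exact ⟨⟨c, hc'⟩, Subtype.ext (funext hc)⟩

lemma coinducedKer_exists_v_sub {b} (hb : (coinducedKer k V).u b = b) :
    ∃ c, (coinducedKer k V).u c = c ∧ (coinducedKer k V).v c - c = b := by
  obtain ⟨b, hb'⟩ := b
  obtain ⟨he, hf⟩ := mem_ker_koszulFst.1 hb'
  have hu : u ∈ periods b := congrFun (congrArg Subtype.val hb)
  obtain ⟨c, hc, hperiods⟩ := exists_translation_sub (ℓ := vCoord) (w := ![-1, 1, 0, 0, 0])
    (fun g => by simp [vCoord, add_sub_right_comm]) b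
  have hc' := (mem_ker_koszulFst (k := k)).2 ⟨hperiods _ (fun g => by simp [vCoord]) he,
    hperiods _ (fun g => by simp [vCoord]) hf⟩
  exact ⟨⟨c, hc'⟩, Subtype.ext (funext (hperiods _ (fun g => by simp [vCoord]) hu)),
    Subtype.ext (funext hc)⟩

lemma coinducedKer_exists_t_sub {b} (hx : (coinducedKer k V).x b = b)
    (hu : (coinducedKer k V).u b = b) (hv : (coinducedKer k V).v b = b) :
    ∃ c, ((coinducedKer k V).x c = c ∧ (coinducedKer k V).u c = c ∧ (coinducedKer k V).v c = c) ∧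
      (coinducedKer k V).t c - c = b := by
  obtain ⟨b, hb⟩ := b
  obtain ⟨he, hf⟩ := mem_ker_koszulFst.1 hb
  replace hx : x ∈ periods b := congrFun (congrArg Subtype.val hx)
  replace hu : u ∈ periods b := congrFun (congrArg Subtype.val hu)
  replace hv : v ∈ periods b := congrFun (congrArg Subtype.val hv)
  obtain ⟨c, hc, hxc, hperiods⟩ := exists_t_sub hx hv
  have hc' := (mem_ker_koszulFst (k := k)).2 ⟨
    hperiods _ (fun g => by simp [tCoord_mul_translation]) he,
    hperiods _ (fun g => by simp [tCoord_mul_translation]) hf⟩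
  have huc := hperiods _ (fun g => by simp [tCoord_mul_translation]) hu
  have hvc := hperiods _ (fun g => by simp [tCoord_mul_translation]) hv
  exact ⟨⟨c, hc'⟩, ⟨Subtype.ext (funext hxc), Subtype.ext (funext huc), Subtype.ext (funext hvc)⟩,
    Subtype.ext (funext hc)⟩

lemma coinducedKer_p4Complex_acyclic : (coinducedKer k V).p4Complex.Acyclic := by
  let P (i : ℕ) := (restrictFiber k V (-i)).restrict fun b hb =>
    have hb := mem_ker_koszulFst.1 hb
    mem_ker_koszulFst.2 ⟨translation_mem_periods_restrictFiber hb.1 _,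
      translation_mem_periods_restrictFiber hb.2 _⟩
  have P_translation (i : ℕ) (w : Fin 5 → ℤ) (b : HolGroup → V) (g : HolGroup) :
      restrictFiber k V (-i) (fun g => b (g * translation w)) g =
        restrictFiber k V (-i) b (g * translation w) := by
    simp only [restrictFiber_apply, proj_mul_translation]
  have P_x (i : ℕ) (b : HolGroup → V) (g : HolGroup) :
      restrictFiber k V (-(i + 1 : ℕ)) (fun g => b (g * x)) g =
        restrictFiber k V (-i) b (g * x) := by
    simp only [restrictFiber_apply, proj_mul_x, Nat.cast_succ, neg_add, ← sub_eq_add_neg,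
      eq_sub_iff_add_eq]
  refine I4Action.p4Complex_acyclic_of_sum_eq_one (P := P) coinducedKer_exists_u_sub
    (fun _ => coinducedKer_exists_v_sub)
    (fun i b => Subtype.ext (funext (P_translation i _ b.1)))
    (fun i b => Subtype.ext (funext (P_translation i _ b.1)))
    (fun i b => Subtype.ext (funext (P_x i b.1))) rfl ?_
  ext b : 2
  simpa [P] using sum_restrictFiber b.1

theorem complex_operators_rightTranslation_acyclic :
    (operators (rightTranslation k HolGroup V)).complex.Acyclic := by
  refine CrysAction.complex_acyclic _ (fun b => ?_) (fun b hb => ?_)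
    (I4Action.i4Complex_acyclic coinducedKer_p4Complex_acyclic
      fun _ => coinducedKer_exists_t_sub)
  · obtain ⟨c, hc, -⟩ := exists_translation_sub (ℓ := eCoord) (w := ![0, 0, 1, 0, 0])
      (fun g => by simp [eCoord]) b
    exact ⟨c, funext hc⟩
  · have he : e ∈ periods b := congrFun hb
    obtain ⟨c, hc, hperiods⟩ := exists_translation_sub (ℓ := fCoord) (w := ![0, 0, 0, 0, -1])
      (fun g => by simp [fCoord, add_comm]) b
    exact ⟨c, funext (hperiods _ (fun g => by simp [fCoord]) he), funext hc⟩

theorem nonempty_homology_cochainsFunctor_iso (n : ℕ) (A : Rep.{0} k HolGroup) :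
    Nonempty (((cochainsFunctor k).obj A).homology n ≅ groupCohomology A n) :=
  nonempty_iso_groupCohomology _ cochainsFunctor_shortExact
    (fun _ _ _ n => complex_operators_rightTranslation_acyclic.isZero_homology n)
    (invariantsIsoHomologyZero k).symm n A

end HolGroup

end CoinducedAcyclic

section Involutory

namespace I4Action

open PeriodicComplex

variable {k V T U W : Type*} [CommRing k] [AddCommGroup V] [Module k V] [AddCommGroup T]
  [Module k T] [AddCommGroup U] [Module k U] [AddCommGroup W] [Module k W] (O : I4Action k V)

/-- The action factors through the quotient of `I4` of order two. -/
structure IsInvolutory : Prop where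
  x_x (a : V) : O.x (O.x a) = a
  u (a : V) : O.u a = a
  v (a : V) : O.v a = a
  t (a : V) : O.t a = a

/-- The complex computing the cohomology of `⟨x⟩ ≅ ℤ/4`. -/
abbrev rotationComplex : PeriodicComplex k V := cyclicComplex 4 O.rotation O.rotation_pow

/-- The elements whose sum with their image under `x` is divisible by two. -/
def evenTrace : Submodule k V :=
  (LinearMap.range (2 • LinearMap.id : Module.End k V)).comap (1 + O.rotation)

/-- The submodule `(2, 1 + x) V`. -/
def twoAddTrace : Submodule k V :=
  LinearMap.range (2 • LinearMap.id : Module.End k V) ⊔ LinearMap.range (1 + O.rotation)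

/-- The submodule `2 (x - 1) V`. -/
def twoSub : Submodule k V := LinearMap.range (2 • (O.rotation - 1))

variable {O}

lemma mem_evenTrace {w : V} : w ∈ O.evenTrace ↔ ∃ s, 2 • s = w + O.x w := Iff.rfl

lemma mem_twoAddTrace {w : V} : w ∈ O.twoAddTrace ↔ ∃ s q, 2 • s + (q + O.x q) = w := by
  simp [twoAddTrace, Submodule.mem_sup]

lemma mem_twoSub {w : V} : w ∈ O.twoSub ↔ ∃ q, 2 • (O.x q - q) = w := Iff.rfl

namespace IsInvolutory

lemma u_symm (h : O.IsInvolutory) (a : V) : O.u.symm a = a :=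
  (LinearEquiv.symm_apply_eq O.u).2 (h.u a).symm

lemma v_symm (h : O.IsInvolutory) (a : V) : O.v.symm a = a :=
  (LinearEquiv.symm_apply_eq O.v).2 (h.v a).symm

lemma rotationComplex_d_true (h : O.IsInvolutory) (a : V) :
    O.rotationComplex.d true a = 2 • (a + O.x a) := by
  simp only [cyclicComplex_d_true, Finset.sum_range_succ, Finset.sum_range_zero, pow_succ, pow_zero,
    Module.End.mul_apply, Module.End.one_apply, rotation_apply, h.x_x]
  abel

lemma i4Complex_d_false (h : O.IsInvolutory) (a b c e a' b' c' e' : V) :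
    O.i4Complex.d false ((a, (b, c), e), a', (b', c'), e') =
      ((O.rotationComplex.d false a, (0, 0), O.x e - e),
        e - (b + O.x b + (c + O.x c)) - 2 • (a' + O.x a'),
        (-(b' + O.x c'), -O.x e - (c' - O.x b')), -O.rotationComplex.d true e') := by
  simp only [i4Complex, fiber_d_apply, p4Complex_d_false, p4Complex_d_true, p4TranslationSubOne,
    p4TranslationEven_apply, h.x_x, h.u, h.v, h.t, h.u_symm, h.v_symm, cyclicComplex_d_false,
    h.rotationComplex_d_true, cond_false, Bool.not_false, LinearMap.sub_apply,
    LinearMap.id_apply, rotation_apply, Prod.mk_sub_mk, Prod.mk.injEq, true_and]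
  refine ⟨⟨⟨?_, ?_⟩, ?_⟩, ?_, ⟨?_, ?_⟩, ?_⟩ <;> abel

lemma i4Complex_d_true (h : O.IsInvolutory) (a b c e a' b' c' e' : V) :
    O.i4Complex.d true ((a, (b, c), e), a', (b', c'), e') =
      ((O.rotationComplex.d true a, (b + O.x c, c - O.x b), 2 • (e + O.x e)),
        e - O.x c - (O.x a' - a'), (e + O.x e, -(e + O.x e)), -O.rotationComplex.d false e') := by
  simp only [i4Complex, fiber_d_apply, p4Complex_d_false, p4Complex_d_true, p4TranslationSubOne,
    p4TranslationOdd_apply, h.x_x, h.u, h.v, h.t, h.u_symm, h.v_symm, cyclicComplex_d_false,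
    h.rotationComplex_d_true, cond_true, Bool.not_true, LinearMap.sub_apply,
    LinearMap.id_apply, rotation_apply, Prod.mk_sub_mk, Prod.mk.injEq]
  refine ⟨⟨?_, ⟨?_, ?_⟩, ?_⟩, ?_, ⟨?_, ?_⟩, ?_⟩ <;> abel

end IsInvolutory

lemma mem_p4Complex_F {m : ℕ} {a b c e : V} : (a, (b, c), e) ∈ O.p4Complex.F m ↔
    a ∈ O.rotationComplex.F m ∧
      (b ∈ O.rotationComplex.F (m - 1) ∧ c ∈ O.rotationComplex.F (m - 1)) ∧
        e ∈ O.rotationComplex.F (m - 2) := by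
  rcases m with _ | _ | _ | m <;> simp [p4Complex, mem_tot_F]

lemma mem_i4Complex_F {m : ℕ} {a b c e a' b' c' e' : V} :
    ((a, (b, c), e), a', (b', c'), e') ∈ O.i4Complex.F m ↔
      (a ∈ O.rotationComplex.F m ∧
        (b ∈ O.rotationComplex.F (m - 1) ∧ c ∈ O.rotationComplex.F (m - 1)) ∧
          e ∈ O.rotationComplex.F (m - 2)) ∧
      a' ∈ O.rotationComplex.F (m - 1) ∧
        (b' ∈ O.rotationComplex.F (m - 2) ∧ c' ∈ O.rotationComplex.F (m - 2)) ∧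
          e' ∈ O.rotationComplex.F (m - 3) :=
  and_congr mem_p4Complex_F mem_p4Complex_F

namespace IsInvolutory

lemma i4Complex_d_true_eq_zero [IsAddTorsionFree V] (h : O.IsInvolutory)
    {a b c e a' b' c' e' : V} :
    O.i4Complex.d true ((a, (b, c), e), a', (b', c'), e') = 0 ↔
      O.rotationComplex.d true a = 0 ∧ b = 0 ∧ c = 0 ∧ e = O.x a' - a' ∧
        O.rotationComplex.d false e' = 0 := by
  simp only [h.i4Complex_d_true, Prod.mk_eq_zero, neg_eq_zero]
  constructor
  · rintro ⟨⟨ha, ⟨hb, hc⟩, -⟩, ha', -, he'⟩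
    have hc' : c = 0 := by
      have := congrArg O.x hb
      simp only [map_add, map_zero, h.x_x] at this
      grind
    grind [map_zero O.x]
  · rintro ⟨ha, rfl, rfl, rfl, he'⟩
    simp only [map_sub, map_zero, h.x_x]
    grind

lemma i4Complex_d_false_eq_zero (h : O.IsInvolutory) {a b c e a' b' c' e' : V} :
    O.i4Complex.d false ((a, (b, c), e), a', (b', c'), e') = 0 ↔
      O.rotationComplex.d false a = 0 ∧
        e = b + O.x b + (c + O.x c) + 2 • (a' + O.x a') ∧ 2 • c' = -e ∧ b' = -O.x c' ∧
          O.rotationComplex.d true e' = 0 := by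
  simp only [h.i4Complex_d_false, Prod.mk_eq_zero, neg_eq_zero, true_and, sub_eq_zero]
  constructor
  · rintro ⟨⟨ha, hxe⟩, he, ⟨hb', hc'⟩, he'⟩
    have hxb' := congrArg O.x hb'
    simp only [map_add, map_zero, h.x_x] at hxb'
    grind
  · rintro ⟨ha, rfl, hc', rfl, he'⟩
    simp only [map_neg, map_add, map_nsmul, h.x_x]
    grind

lemma isSubquotient_i4Complex_one (h : O.IsInvolutory)
    (hT : IsSubquotient (O.rotationComplex.cocycles 1) (O.rotationComplex.coboundaries 1) T) :
    IsSubquotient (O.i4Complex.cocycles 1) (O.i4Complex.coboundaries 1) T := by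
  refine hT.comap (LinearMap.fst k _ _ ∘ₗ LinearMap.fst k _ _) ?_ ?_ ?_
  · rintro ⟨⟨a, ⟨b, c⟩, e⟩, a', ⟨b', c'⟩, e'⟩ ⟨-, hdy⟩
    exact ⟨trivial, (h.i4Complex_d_false_eq_zero.1 hdy).1⟩
  · rintro a ⟨-, ha⟩
    exact ⟨((a, (0, 0), 0), 0, (0, 0), 0), ⟨mem_i4Complex_F.2 (by simp),
      h.i4Complex_d_false_eq_zero.2 (by simpa using ha)⟩, rfl⟩
  · rintro ⟨⟨a, ⟨b, c⟩, e⟩, a', ⟨b', c'⟩, e'⟩ ⟨hy, -⟩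
    simp_all [mem_coboundaries, mem_i4Complex_F, h.i4Complex_d_true]

lemma isSubquotient_i4Complex_two [IsAddTorsionFree V] (h : O.IsInvolutory)
    (hT : IsSubquotient (O.rotationComplex.cocycles 2) (O.rotationComplex.coboundaries 2) T)
    (hU : IsSubquotient (O.rotationComplex.cocycles 1) (O.rotationComplex.coboundaries 1) U) :
    IsSubquotient (O.i4Complex.cocycles 2) (O.i4Complex.coboundaries 2) (T × U) := by
  refine (hT.prod hU).comap ((LinearMap.fst k _ _).prodMap (LinearMap.fst k _ _)) ?_ ?_ ?_
  · rintro ⟨⟨a, ⟨b, c⟩, e⟩, a', ⟨b', c'⟩, e'⟩ ⟨hy, hdy⟩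
    obtain ⟨ha, -, -, ha', -⟩ := h.i4Complex_d_true_eq_zero.1 hdy
    obtain ⟨⟨-, -, rfl⟩, -⟩ := hy
    exact ⟨⟨trivial, ha⟩, trivial, ha'.symm⟩
  · rintro ⟨a, a'⟩ ⟨⟨-, ha⟩, -, ha'⟩
    exact ⟨((a, (0, 0), 0), a', (0, 0), 0), ⟨mem_i4Complex_F.2 (by simp),
      h.i4Complex_d_true_eq_zero.2 ⟨ha, rfl, rfl, ha'.symm, map_zero _⟩⟩, rfl⟩
  · rintro ⟨⟨a, ⟨b, c⟩, e⟩, a', ⟨b', c'⟩, e'⟩ ⟨hy, hdy⟩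
    obtain ⟨-, rfl, rfl, -, -⟩ := h.i4Complex_d_true_eq_zero.1 hdy
    simp_all [mem_coboundaries, mem_i4Complex_F, h.i4Complex_d_false, eq_comm]

lemma mem_coboundaries_i4Complex_three [IsAddTorsionFree V] (h : O.IsInvolutory)
    {a b c e a' b' c' e' : V}
    (hy : ((a, (b, c), e), a', (b', c'), e') ∈ O.i4Complex.cocycles 3) :
    ((a, (b, c), e), a', (b', c'), e') ∈ O.i4Complex.coboundaries 3 ↔
      a ∈ O.rotationComplex.coboundaries 3 ∧ c + O.x b + 2 • O.x a' ∈ O.twoSub := by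
  obtain ⟨-, he, hc', hb', -⟩ := h.i4Complex_d_false_eq_zero.1 hy.2
  obtain rfl : e' = 0 := (mem_i4Complex_F.1 hy.1).2.2.2
  constructor
  · rintro ⟨⟨⟨a₀, ⟨b₀, c₀⟩, e₀⟩, q, ⟨b₀', c₀'⟩, e₀'⟩, hy₀, hdy₀⟩
    obtain rfl : e₀ = 0 := (mem_i4Complex_F.1 hy₀).1.2.2
    replace hdy₀ := (h.i4Complex_d_true ..).symm.trans hdy₀
    simp only [Prod.mk.injEq] at hdy₀
    obtain ⟨⟨ha₀, ⟨rfl, rfl⟩, -⟩, rfl, -⟩ := hdy₀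
    refine ⟨⟨a₀, trivial, ha₀⟩, mem_twoSub.2 ⟨q, ?_⟩⟩
    simp only [map_add, map_sub, h.x_x]
    grind
  · rintro ⟨⟨a₀, -, ha₀⟩, hq⟩
    obtain ⟨q, hq⟩ := mem_twoSub.1 hq
    have hxq : 2 • (q - O.x q) = O.x c + b + 2 • a' := by simpa [h.x_x] using congrArg O.x hq
    obtain rfl : c' = 0 := by grind
    refine ⟨((a₀, (b + a' + O.x q - q, -O.x a' - q + O.x q), 0), q, (0, 0), 0),
      mem_i4Complex_F.2 (by simp), (h.i4Complex_d_true ..).trans ?_⟩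
    simp only [map_add, map_sub, map_neg, map_zero, h.x_x, Prod.mk.injEq]
    refine ⟨⟨ha₀, ⟨?_, ?_⟩, ?_⟩, ?_, ⟨?_, ?_⟩, ?_⟩ <;> grind [map_zero O.x]

lemma isSubquotient_i4Complex_three [IsAddTorsionFree V] (h : O.IsInvolutory)
    (hT : IsSubquotient (O.rotationComplex.cocycles 3) (O.rotationComplex.coboundaries 3) T)
    (hU : IsSubquotient O.evenTrace O.twoSub U) :
    IsSubquotient (O.i4Complex.cocycles 3) (O.i4Complex.coboundaries 3) (T × U) := by
  let φ : (V × (V × V) × V) × V × (V × V) × V →ₗ[k] V × V :=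
    { toFun y := (y.1.1, y.1.2.1.2 + O.x y.1.2.1.1 + 2 • O.x y.2.1)
      map_add' y z := by ext <;> simp; abel
      map_smul' r y := by ext <;> simp [smul_comm r] }
  refine (hT.prod hU).comap φ ?_ ?_ fun y hy => (h.mem_coboundaries_i4Complex_three hy).symm
  · rintro ⟨⟨a, ⟨b, c⟩, e⟩, a', ⟨b', c'⟩, e'⟩ ⟨-, hdy⟩
    obtain ⟨ha, he, hc', -, -⟩ := h.i4Complex_d_false_eq_zero.1 hdy
    refine ⟨⟨trivial, ha⟩, mem_evenTrace.2 ⟨-c', ?_⟩⟩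
    simp only [φ, LinearMap.coe_mk, AddHom.coe_mk, map_add, map_nsmul, h.x_x]
    grind
  · rintro ⟨a, w⟩ ⟨⟨-, ha⟩, hw⟩
    obtain ⟨s, hs⟩ := mem_evenTrace.1 hw
    exact ⟨((a, (0, w), w + O.x w), 0, (O.x s, -s), 0), ⟨mem_i4Complex_F.2 (by simp),
      h.i4Complex_d_false_eq_zero.2 ⟨ha, by simp, by rw [smul_neg, hs], by simp, map_zero _⟩⟩,
      by simp [φ]⟩

lemma mem_coboundaries_i4Complex_even [IsAddTorsionFree V] (h : O.IsInvolutory) {n : ℕ}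
    (hn : n.bodd = false) {a b c e a' b' c' e' : V}
    (hy : ((a, (b, c), e), a', (b', c'), e') ∈ O.i4Complex.cocycles (n + 4)) :
    ((a, (b, c), e), a', (b', c'), e') ∈ O.i4Complex.coboundaries (n + 4) ↔
      a ∈ O.rotationComplex.coboundaries (n + 4) ∧ e' ∈ O.rotationComplex.coboundaries (n + 1) ∧
        c' + O.x a' + O.x b' ∈ O.twoAddTrace := by
  simp only [cocycles, coboundaries, Nat.bodd_succ, hn, Bool.not_false, Bool.not_true] at hy ⊢
  obtain ⟨-, rfl, rfl, rfl, -⟩ := h.i4Complex_d_true_eq_zero.1 hy.2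
  constructor
  · rintro ⟨⟨⟨a₀, ⟨b₀, c₀⟩, e₀⟩, a₀', ⟨b₀', c₀'⟩, e₀'⟩, hy₀, hdy₀⟩
    replace hdy₀ := (h.i4Complex_d_false ..).symm.trans hdy₀
    simp only [Prod.mk.injEq] at hdy₀
    obtain ⟨⟨ha₀, -⟩, rfl, ⟨rfl, rfl⟩, rfl⟩ := hdy₀
    refine ⟨⟨a₀, trivial, ha₀⟩, ⟨-e₀', neg_mem (mem_i4Complex_F.1 hy₀).2.2.2, map_neg _ _⟩,
      mem_twoAddTrace.2 ⟨-c₀', -(b₀ + c₀ + 2 • a₀'), ?_⟩⟩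
    simp only [map_add, map_sub, map_neg, map_nsmul, h.x_x]
    grind
  · rintro ⟨⟨a₀, -, ha₀⟩, ⟨e₀', he₀', rfl⟩, hr⟩
    obtain ⟨s, q, hsq⟩ := mem_twoAddTrace.1 hr
    refine ⟨((a₀, (-q, 0), a' - q - O.x q), 0, (O.x s - b', -s), -e₀'),
      mem_i4Complex_F.2 (by simpa using he₀'), (h.i4Complex_d_false ..).trans ?_⟩
    simp only [map_sub, map_neg, map_zero, h.x_x, Prod.mk.injEq]
    refine ⟨⟨ha₀, trivial, ?_⟩, ?_, ⟨?_, ?_⟩, neg_neg _⟩ <;> grind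

lemma isSubquotient_i4Complex_even [IsAddTorsionFree V] (h : O.IsInvolutory) {n : ℕ}
    (hn : n.bodd = false)
    (hT : IsSubquotient (O.rotationComplex.cocycles (n + 4))
      (O.rotationComplex.coboundaries (n + 4)) T)
    (hU : IsSubquotient (O.rotationComplex.cocycles (n + 1))
      (O.rotationComplex.coboundaries (n + 1)) U)
    (hW : IsSubquotient ⊤ O.twoAddTrace W) :
    IsSubquotient (O.i4Complex.cocycles (n + 4)) (O.i4Complex.coboundaries (n + 4))
      (T × U × W) := by
  let φ : (V × (V × V) × V) × V × (V × V) × V →ₗ[k] V × V × V :=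
    { toFun y := (y.1.1, y.2.2.2, y.2.2.1.2 + O.x y.2.1 + O.x y.2.2.1.1)
      map_add' y z := by ext <;> simp; abel
      map_smul' r y := by ext <;> simp }
  refine (hT.prod (hU.prod hW)).comap φ ?_ ?_
    fun y hy => (h.mem_coboundaries_i4Complex_even hn hy).symm
  all_goals simp only [cocycles, Nat.bodd_succ, hn, Bool.not_false, Bool.not_true]
  · rintro ⟨⟨a, ⟨b, c⟩, e⟩, a', ⟨b', c'⟩, e'⟩ ⟨-, hdy⟩
    obtain ⟨ha, -, -, -, he'⟩ := h.i4Complex_d_true_eq_zero.1 hdy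
    exact ⟨⟨trivial, ha⟩, ⟨trivial, he'⟩, trivial⟩
  · rintro ⟨a, e', r⟩ ⟨⟨-, ha⟩, ⟨-, he'⟩, -⟩
    exact ⟨((a, (0, 0), 0), 0, (0, r), e'), ⟨mem_i4Complex_F.2 (by simp),
      h.i4Complex_d_true_eq_zero.2 ⟨ha, rfl, rfl, by simp, he'⟩⟩, by simp [φ]⟩

lemma mem_coboundaries_i4Complex_odd [IsAddTorsionFree V] (h : O.IsInvolutory) {n : ℕ}
    (hn : n.bodd = true) {a b c e a' b' c' e' : V}
    (hy : ((a, (b, c), e), a', (b', c'), e') ∈ O.i4Complex.cocycles (n + 4)) :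
    ((a, (b, c), e), a', (b', c'), e') ∈ O.i4Complex.coboundaries (n + 4) ↔
      a ∈ O.rotationComplex.coboundaries (n + 4) ∧ e' ∈ O.rotationComplex.coboundaries (n + 1) ∧
        c + O.x b ∈ LinearMap.range (2 • LinearMap.id : Module.End k V) := by
  simp only [cocycles, coboundaries, Nat.bodd_succ, hn, Bool.not_false, Bool.not_true] at hy ⊢
  obtain ⟨-, he, hc', hb', -⟩ := h.i4Complex_d_false_eq_zero.1 hy.2
  constructor
  · rintro ⟨⟨⟨a₀, ⟨b₀, c₀⟩, e₀⟩, a₀', ⟨b₀', c₀'⟩, e₀'⟩, hy₀, hdy₀⟩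
    replace hdy₀ := (h.i4Complex_d_true ..).symm.trans hdy₀
    simp only [Prod.mk.injEq] at hdy₀
    obtain ⟨⟨ha₀, ⟨rfl, rfl⟩, -⟩, -, -, rfl⟩ := hdy₀
    refine ⟨⟨a₀, trivial, ha₀⟩, ⟨-e₀', neg_mem (mem_i4Complex_F.1 hy₀).2.2.2, map_neg _ _⟩,
      c₀, ?_⟩
    simp only [LinearMap.smul_apply, LinearMap.id_apply, map_add, h.x_x]
    grind
  · rintro ⟨⟨a₀, -, ha₀⟩, ⟨e₀', he₀', rfl⟩, c₀, hc₀⟩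
    replace hc₀ : 2 • c₀ = c + O.x b := hc₀
    have hxc₀ : 2 • O.x c₀ = O.x c + b := by simpa [h.x_x] using congrArg O.x hc₀
    obtain rfl : c' = -(a' + O.x a' + c₀ + O.x c₀) := by grind
    refine ⟨((a₀, (b - O.x c₀, c₀), a' + O.x c₀), 0, (0, 0), -e₀'),
      mem_i4Complex_F.2 (by simpa using he₀'), (h.i4Complex_d_true ..).trans ?_⟩
    simp only [map_add, map_sub, map_neg, map_zero, h.x_x, Prod.mk.injEq] at hb' ⊢
    refine ⟨⟨ha₀, ⟨?_, ?_⟩, ?_⟩, ?_, ⟨?_, ?_⟩, ?_⟩ <;> grind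

lemma isSubquotient_i4Complex_odd [IsAddTorsionFree V] (h : O.IsInvolutory) {n : ℕ}
    (hn : n.bodd = true)
    (hT : IsSubquotient (O.rotationComplex.cocycles (n + 4))
      (O.rotationComplex.coboundaries (n + 4)) T)
    (hU : IsSubquotient (O.rotationComplex.cocycles (n + 1))
      (O.rotationComplex.coboundaries (n + 1)) U)
    (hW : IsSubquotient O.evenTrace (LinearMap.range (2 • LinearMap.id : Module.End k V)) W) :
    IsSubquotient (O.i4Complex.cocycles (n + 4)) (O.i4Complex.coboundaries (n + 4))
      (T × U × W) := by
  let φ : (V × (V × V) × V) × V × (V × V) × V →ₗ[k] V × V × V :=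
    { toFun y := (y.1.1, y.2.2.2, y.1.2.1.2 + O.x y.1.2.1.1)
      map_add' y z := by ext <;> simp; abel
      map_smul' r y := by ext <;> simp }
  refine (hT.prod (hU.prod hW)).comap φ ?_ ?_
    fun y hy => (h.mem_coboundaries_i4Complex_odd hn hy).symm
  all_goals simp only [cocycles, Nat.bodd_succ, hn, Bool.not_false, Bool.not_true]
  · rintro ⟨⟨a, ⟨b, c⟩, e⟩, a', ⟨b', c'⟩, e'⟩ ⟨-, hdy⟩
    obtain ⟨ha, he, hc', -, he'⟩ := h.i4Complex_d_false_eq_zero.1 hdy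
    refine ⟨⟨trivial, ha⟩, ⟨trivial, he'⟩, mem_evenTrace.2 ⟨-(c' + a' + O.x a'), ?_⟩⟩
    simp only [φ, LinearMap.coe_mk, AddHom.coe_mk, map_add, h.x_x]
    grind
  · rintro ⟨a, e', w⟩ ⟨⟨-, ha⟩, ⟨-, he'⟩, hw⟩
    obtain ⟨s, hs⟩ := mem_evenTrace.1 hw
    exact ⟨((a, (0, w), w + O.x w), 0, (O.x s, -s), e'), ⟨mem_i4Complex_F.2 (by simp),
      h.i4Complex_d_false_eq_zero.2 ⟨ha, by simp, by rw [smul_neg, hs], by simp, he'⟩⟩,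
      by simp [φ]⟩

end IsInvolutory

end I4Action
end Involutory

section Trivial

lemma IsSubquotient.zmod {X : Type*} [AddCommGroup X] {Z B : Submodule ℤ X} {n : ℕ}
    (φ : X →ₗ[ℤ] ℤ) (surjective : ∀ a, ∃ x ∈ Z, φ x = a)
    (dvd_iff : ∀ x ∈ Z, (n : ℤ) ∣ φ x ↔ x ∈ B) : IsSubquotient Z B (ZMod n) := by
  refine .of_linearMap ((Int.castAddHom (ZMod n)).toIntLinearMap ∘ₗ φ) (fun t => ?_)
    fun x hx => (ZMod.intCast_zmod_eq_zero_iff_dvd _ n).trans (dvd_iff x hx)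
  obtain ⟨a, rfl⟩ := ZMod.intCast_surjective t
  obtain ⟨x, hx, rfl⟩ := surjective a
  exact ⟨x, hx, rfl⟩

namespace I4Action

open PeriodicComplex

variable {k V : Type*} [CommRing k] [AddCommGroup V] [Module k V] {O : I4Action k V} {m : ℕ} {a : V}

lemma mem_cocycles_rotationComplex_odd (hm : m.bodd = false) :
    a ∈ O.rotationComplex.cocycles (m + 1) ↔ O.x a = a := by
  simp [mem_cocycles, hm, cyclicComplex_d_false, sub_eq_zero]

lemma mem_coboundaries_rotationComplex_one : a ∈ O.rotationComplex.coboundaries 1 ↔ a = 0 := by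
  simp [mem_coboundaries, eq_comm]

lemma mem_coboundaries_rotationComplex_even (hm : m.bodd = false) :
    a ∈ O.rotationComplex.coboundaries (m + 2) ↔ ∃ c, O.x c - c = a := by
  simp [mem_coboundaries, hm, cyclicComplex_d_false]

namespace IsInvolutory

lemma mem_cocycles_rotationComplex_even [IsAddTorsionFree V] (h : O.IsInvolutory)
    (hm : m.bodd = true) : a ∈ O.rotationComplex.cocycles (m + 1) ↔ O.x a = -a := by
  simp [mem_cocycles, hm, h.rotationComplex_d_true, -smul_add, eq_neg_iff_add_eq_zero, add_comm]

lemma mem_coboundaries_rotationComplex_odd (h : O.IsInvolutory) (hm : m.bodd = true) :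
    a ∈ O.rotationComplex.coboundaries (m + 2) ↔ ∃ c, 2 • (c + O.x c) = a := by
  simp [mem_coboundaries, hm, h.rotationComplex_d_true]

end IsInvolutory

/-- All generators act as the identity. -/
structure IsTrivial (O : I4Action k V) : Prop where
  x (a : V) : O.x a = a
  u (a : V) : O.u a = a
  v (a : V) : O.v a = a
  t (a : V) : O.t a = a

namespace IsTrivial

lemma isInvolutory (h : O.IsTrivial) : O.IsInvolutory := ⟨fun a => by simp [h.x], h.u, h.v, h.t⟩

lemma isInvolutory_swap (h : O.IsTrivial) : O.swap.IsInvolutory := by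
  constructor <;> simp [h.x, h.u, h.v, h.t]

lemma isInvolutory_sign (h : O.IsTrivial) : O.sign.IsInvolutory := by
  constructor <;> simp [h.x, h.u, h.v, h.t]

variable {O : I4Action ℤ ℤ}

lemma swap_x (h : O.IsTrivial) (p q : ℤ) : O.swap.x (p, q) = (q, p) := by simp [h.x]

lemma sign_x (h : O.IsTrivial) (a : ℤ) : O.sign.x a = -a := by simp [h.x]

lemma isSubquotient_rotationComplex_one (h : O.IsTrivial) :
    IsSubquotient (O.rotationComplex.cocycles 1) (O.rotationComplex.coboundaries 1) ℤ :=
  .of_linearMap LinearMap.id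
    (fun a => ⟨a, (mem_cocycles_rotationComplex_odd rfl).2 (h.x a), rfl⟩)
    fun _ _ => mem_coboundaries_rotationComplex_one.symm

lemma isSubquotient_rotationComplex_even (h : O.IsTrivial) (hm : m.bodd = false) :
    IsSubquotient (O.rotationComplex.cocycles (m + 2)) (O.rotationComplex.coboundaries (m + 2))
      PUnit := by
  refine .punit_of_le fun a ha => ?_
  rw [h.isInvolutory.mem_cocycles_rotationComplex_even (by simp [hm]), h.x] at ha
  obtain rfl : a = 0 := by omega
  exact zero_mem _

lemma isSubquotient_rotationComplex_odd (h : O.IsTrivial) (hm : m.bodd = true) :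
    IsSubquotient (O.rotationComplex.cocycles (m + 2)) (O.rotationComplex.coboundaries (m + 2))
      (ZMod 4) := by
  refine .zmod LinearMap.id
    (fun a => ⟨a, (mem_cocycles_rotationComplex_odd (by simp [hm])).2 (h.x a), rfl⟩) fun a _ => ?_
  rw [h.isInvolutory.mem_coboundaries_rotationComplex_odd hm]
  exact exists_congr fun c => by
    simp only [LinearMap.id_apply, h.x, Int.nsmul_eq_mul]
    grind

lemma isSubquotient_twoAddTrace (h : O.IsTrivial) : IsSubquotient ⊤ O.twoAddTrace (ZMod 2) := by
  refine .zmod LinearMap.id (fun a => ⟨a, trivial, rfl⟩) fun a _ => ?_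
  simp only [mem_twoAddTrace, h.x]
  exact ⟨fun ⟨c, hc⟩ => ⟨c, 0, by simpa using hc.symm⟩,
    fun ⟨s, q, hsq⟩ => ⟨s + q, by rw [LinearMap.id_apply]; grind⟩⟩

lemma isSubquotient_evenTrace_two (h : O.IsTrivial) :
    IsSubquotient O.evenTrace (LinearMap.range (2 • LinearMap.id : Module.End ℤ ℤ)) (ZMod 2) :=
  .zmod LinearMap.id (fun a => ⟨a, mem_evenTrace.2 ⟨a, by rw [h.x, two_nsmul]⟩, rfl⟩)
    fun a _ => exists_congr fun c => by simp [eq_comm]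

lemma isSubquotient_evenTrace_twoSub (h : O.IsTrivial) : IsSubquotient O.evenTrace O.twoSub ℤ :=
  .of_linearMap LinearMap.id (fun a => ⟨a, mem_evenTrace.2 ⟨a, by rw [h.x, two_nsmul]⟩, rfl⟩)
    fun a _ => by simp [mem_twoSub, h.x, eq_comm]

lemma isSubquotient_swap_rotationComplex_one (h : O.IsTrivial) :
    IsSubquotient (O.swap.rotationComplex.cocycles 1) (O.swap.rotationComplex.coboundaries 1)
      ℤ := by
  refine .of_linearMap (LinearMap.fst ℤ ℤ ℤ)
    (fun a => ⟨(a, a), (mem_cocycles_rotationComplex_odd rfl).2 (h.swap_x a a), rfl⟩) ?_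
  rintro ⟨p, q⟩ ha
  rw [mem_cocycles_rotationComplex_odd rfl, h.swap_x, Prod.mk.injEq] at ha
  obtain ⟨rfl, -⟩ := ha
  simp [mem_coboundaries_rotationComplex_one]

lemma isSubquotient_swap_rotationComplex_even (h : O.IsTrivial) (hm : m.bodd = false) :
    IsSubquotient (O.swap.rotationComplex.cocycles (m + 2))
      (O.swap.rotationComplex.coboundaries (m + 2)) PUnit := by
  refine .punit_of_le ?_
  rintro ⟨p, q⟩ ha
  rw [h.isInvolutory_swap.mem_cocycles_rotationComplex_even (by simp [hm]), h.swap_x,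
    Prod.neg_mk, Prod.mk.injEq] at ha
  obtain ⟨rfl, -⟩ := ha
  exact (mem_coboundaries_rotationComplex_even hm).2 ⟨(0, p), by simp [h.swap_x]⟩

lemma isSubquotient_swap_rotationComplex_odd (h : O.IsTrivial) (hm : m.bodd = true) :
    IsSubquotient (O.swap.rotationComplex.cocycles (m + 2))
      (O.swap.rotationComplex.coboundaries (m + 2)) (ZMod 2) := by
  refine .zmod (LinearMap.fst ℤ ℤ ℤ) (fun a => ⟨(a, a), ?_, rfl⟩) ?_
  · exact (mem_cocycles_rotationComplex_odd (by simp [hm])).2 (h.swap_x a a)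
  · rintro ⟨p, q⟩ ha
    rw [mem_cocycles_rotationComplex_odd (by simp [hm]), h.swap_x,
      Prod.mk.injEq] at ha
    obtain ⟨rfl, -⟩ := ha
    rw [h.isInvolutory_swap.mem_coboundaries_rotationComplex_odd hm]
    constructor
    · rintro ⟨c, hc⟩
      exact ⟨(c, 0), by simp_all [h.swap_x]⟩
    · rintro ⟨⟨c, c'⟩, hc⟩
      exact ⟨c + c', by simp_all [h.swap_x]⟩

lemma isSubquotient_swap_twoAddTrace (h : O.IsTrivial) :
    IsSubquotient ⊤ O.swap.twoAddTrace (ZMod 2) := by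
  refine .zmod (LinearMap.fst ℤ ℤ ℤ + LinearMap.snd ℤ ℤ ℤ) (fun a => ⟨(a, 0), by simp⟩) ?_
  rintro ⟨p, q⟩ -
  rw [mem_twoAddTrace]
  constructor
  · rintro ⟨c, hc⟩
    refine ⟨(c - q, 0), (q, 0), ?_⟩
    simp only [LinearMap.add_apply, LinearMap.fst_apply, LinearMap.snd_apply, h.swap_x,
      Prod.smul_mk, Int.nsmul_eq_mul, Prod.mk_add_mk, Prod.mk.injEq] at hc ⊢
    omega
  · rintro ⟨⟨s, s'⟩, ⟨c, c'⟩, hsc⟩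
    refine ⟨s + s' + c + c', ?_⟩
    simp only [LinearMap.add_apply, LinearMap.fst_apply, LinearMap.snd_apply, h.swap_x,
      Prod.smul_mk, Int.nsmul_eq_mul, Prod.mk_add_mk, Prod.mk.injEq] at hsc ⊢
    omega

lemma mem_swap_evenTrace (h : O.IsTrivial) {p q : ℤ} :
    (p, q) ∈ O.swap.evenTrace ↔ Even (p + q) := by
  simp only [mem_evenTrace, h.swap_x, Prod.exists, Prod.smul_mk, Int.nsmul_eq_mul, Prod.mk_add_mk,
    Prod.mk.injEq]
  exact ⟨fun ⟨s, s', hs⟩ => ⟨s, by omega⟩, fun ⟨s, hs⟩ => ⟨s, s, by omega⟩⟩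

lemma isSubquotient_swap_evenTrace_two (h : O.IsTrivial) : IsSubquotient O.swap.evenTrace
    (LinearMap.range (2 • LinearMap.id : Module.End ℤ (ℤ × ℤ))) (ZMod 2) := by
  refine .zmod (LinearMap.fst ℤ ℤ ℤ) (fun a => ⟨(a, a), h.mem_swap_evenTrace.2 ⟨a, rfl⟩, rfl⟩) ?_
  rintro ⟨p, q⟩ hpq
  obtain ⟨s, hs⟩ := h.mem_swap_evenTrace.1 hpq
  simp only [LinearMap.mem_range, LinearMap.smul_apply, LinearMap.id_apply, LinearMap.fst_apply,
    Prod.exists, Prod.smul_mk, Int.nsmul_eq_mul, Prod.mk.injEq]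
  exact ⟨fun ⟨c, hc⟩ => ⟨c, s - c, by omega⟩, fun ⟨c, c', hc⟩ => ⟨c, by omega⟩⟩

lemma isSubquotient_swap_evenTrace_twoSub (h : O.IsTrivial) :
    IsSubquotient O.swap.evenTrace O.swap.twoSub (ℤ × ZMod 2) := by
  have even (z : O.swap.evenTrace) : Even (z.1.1 + z.1.2) := h.mem_swap_evenTrace.1 z.2
  let φ : O.swap.evenTrace →+ ℤ × ZMod 2 :=
    .mk' (fun z => ((z.1.1 + z.1.2) / 2, z.1.1)) fun z w => Prod.ext
      (by grind [Submodule.coe_add, Prod.fst_add, Prod.snd_add])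
      (by simp)
  refine ⟨φ.toIntLinearMap, ?_, ?_⟩
  · rintro ⟨s, r⟩
    obtain ⟨p, rfl⟩ := ZMod.intCast_surjective r
    exact ⟨⟨(p, 2 * s - p), h.mem_swap_evenTrace.2 ⟨s, by ring⟩⟩, by simp [φ]⟩
  · rintro ⟨⟨p, q⟩, hz⟩
    obtain ⟨s, hs⟩ := even ⟨(p, q), hz⟩
    simp only at hs
    have : φ ⟨(p, q), hz⟩ = 0 ↔ (p + q) / 2 = 0 ∧ 2 ∣ p := by
      simp [φ, ZMod.intCast_zmod_eq_zero_iff_dvd]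
    refine this.trans ?_
    simp only [mem_twoSub, h.swap_x, Prod.exists, Prod.mk_sub_mk, Prod.smul_mk, Int.nsmul_eq_mul,
      Prod.mk.injEq]
    exact ⟨fun ⟨_, c, hc⟩ => ⟨0, c, by omega⟩, fun ⟨c, c', hc⟩ => ⟨by omega, by omega⟩⟩

lemma isSubquotient_sign_rotationComplex_odd (h : O.IsTrivial) (hm : m.bodd = false) :
    IsSubquotient (O.sign.rotationComplex.cocycles (m + 1))
      (O.sign.rotationComplex.coboundaries (m + 1)) PUnit := by
  refine .punit_of_le fun a ha => ?_
  rw [mem_cocycles_rotationComplex_odd hm, h.sign_x] at ha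
  obtain rfl : a = 0 := by omega
  exact zero_mem _

lemma isSubquotient_sign_rotationComplex_even (h : O.IsTrivial) (hm : m.bodd = false) :
    IsSubquotient (O.sign.rotationComplex.cocycles (m + 2))
      (O.sign.rotationComplex.coboundaries (m + 2)) (ZMod 2) := by
  refine .zmod LinearMap.id (fun a => ⟨a, ?_, rfl⟩) fun a _ => ?_
  · exact (h.isInvolutory_sign.mem_cocycles_rotationComplex_even (by simp [hm])).2 (h.sign_x a)
  · simp only [mem_coboundaries_rotationComplex_even hm, h.sign_x]
    exact ⟨fun ⟨c, hc⟩ => ⟨-c, by rw [LinearMap.id_apply] at hc; omega⟩,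
      fun ⟨c, hc⟩ => ⟨-c, by rw [LinearMap.id_apply]; omega⟩⟩

lemma isSubquotient_sign_twoAddTrace (h : O.IsTrivial) :
    IsSubquotient ⊤ O.sign.twoAddTrace (ZMod 2) := by
  refine .zmod LinearMap.id (fun a => ⟨a, trivial, rfl⟩) fun a _ => ?_
  simp [mem_twoAddTrace, h.sign_x, dvd_def, eq_comm]

lemma mem_sign_evenTrace (h : O.IsTrivial) (a : ℤ) : a ∈ O.sign.evenTrace :=
  mem_evenTrace.2 ⟨0, by simp [h.sign_x]⟩

lemma isSubquotient_sign_evenTrace_two (h : O.IsTrivial) : IsSubquotient O.sign.evenTrace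
    (LinearMap.range (2 • LinearMap.id : Module.End ℤ ℤ)) (ZMod 2) :=
  .zmod LinearMap.id (fun a => ⟨a, h.mem_sign_evenTrace a, rfl⟩)
    fun a _ => exists_congr fun c => by simp [eq_comm]

lemma isSubquotient_sign_evenTrace_twoSub (h : O.IsTrivial) :
    IsSubquotient O.sign.evenTrace O.sign.twoSub (ZMod 4) := by
  refine .zmod LinearMap.id (fun a => ⟨a, h.mem_sign_evenTrace a, rfl⟩) fun a _ => ?_
  simp only [mem_twoSub, h.sign_x, Int.nsmul_eq_mul]
  exact ⟨fun ⟨c, hc⟩ => ⟨-c, by rw [LinearMap.id_apply] at hc; omega⟩,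
    fun ⟨c, hc⟩ => ⟨-c, by rw [LinearMap.id_apply]; omega⟩⟩

end IsTrivial
end I4Action
end Trivial

section Levels

namespace I4Action.IsTrivial

variable {O : I4Action ℤ ℤ} {m : ℕ}

lemma isSubquotient_i4Complex_two (h : O.IsTrivial) :
    IsSubquotient (O.i4Complex.cocycles 2) (O.i4Complex.coboundaries 2) ℤ :=
  (h.isInvolutory.isSubquotient_i4Complex_two (h.isSubquotient_rotationComplex_even (m := 0) rfl)
    h.isSubquotient_rotationComplex_one).congr .uniqueProd

lemma isSubquotient_i4Complex_three (h : O.IsTrivial) :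
    IsSubquotient (O.i4Complex.cocycles 3) (O.i4Complex.coboundaries 3) (ZMod 4 × ℤ) :=
  h.isInvolutory.isSubquotient_i4Complex_three (h.isSubquotient_rotationComplex_odd (m := 1) rfl)
    h.isSubquotient_evenTrace_twoSub

lemma isSubquotient_i4Complex_four (h : O.IsTrivial) :
    IsSubquotient (O.i4Complex.cocycles 4) (O.i4Complex.coboundaries 4) (ℤ × ZMod 2) :=
  (h.isInvolutory.isSubquotient_i4Complex_even (n := 0) rfl
    (h.isSubquotient_rotationComplex_even rfl) h.isSubquotient_rotationComplex_one
    h.isSubquotient_twoAddTrace).congr .uniqueProd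

lemma isSubquotient_i4Complex_add_five (h : O.IsTrivial) :
    IsSubquotient (O.i4Complex.cocycles (m + 5)) (O.i4Complex.coboundaries (m + 5))
      (ZMod 4 × ZMod 2) := by
  rcases hm : m.bodd with _ | _
  · exact (h.isInvolutory.isSubquotient_i4Complex_odd (n := m + 1) (by simp [hm])
      (h.isSubquotient_rotationComplex_odd (by simp [hm]))
      (h.isSubquotient_rotationComplex_even hm) h.isSubquotient_evenTrace_two).congr
      (.prodCongr (.refl ℤ _) .uniqueProd)
  · exact (h.isInvolutory.isSubquotient_i4Complex_even (n := m + 1) (by simp [hm])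
      (h.isSubquotient_rotationComplex_even (by simp [hm]))
      (h.isSubquotient_rotationComplex_odd hm) h.isSubquotient_twoAddTrace).congr .uniqueProd

lemma isSubquotient_swap_i4Complex_one (h : O.IsTrivial) :
    IsSubquotient (O.swap.i4Complex.cocycles 1) (O.swap.i4Complex.coboundaries 1) ℤ :=
  h.isInvolutory_swap.isSubquotient_i4Complex_one h.isSubquotient_swap_rotationComplex_one

lemma isSubquotient_swap_i4Complex_two (h : O.IsTrivial) :
    IsSubquotient (O.swap.i4Complex.cocycles 2) (O.swap.i4Complex.coboundaries 2) ℤ :=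
  (h.isInvolutory_swap.isSubquotient_i4Complex_two
    (h.isSubquotient_swap_rotationComplex_even (m := 0) rfl)
    h.isSubquotient_swap_rotationComplex_one).congr .uniqueProd

lemma isSubquotient_swap_i4Complex_three (h : O.IsTrivial) :
    IsSubquotient (O.swap.i4Complex.cocycles 3) (O.swap.i4Complex.coboundaries 3)
      (ZMod 2 × ℤ × ZMod 2) :=
  h.isInvolutory_swap.isSubquotient_i4Complex_three
    (h.isSubquotient_swap_rotationComplex_odd (m := 1) rfl) h.isSubquotient_swap_evenTrace_twoSub

lemma isSubquotient_swap_i4Complex_four (h : O.IsTrivial) :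
    IsSubquotient (O.swap.i4Complex.cocycles 4) (O.swap.i4Complex.coboundaries 4) (ℤ × ZMod 2) :=
  (h.isInvolutory_swap.isSubquotient_i4Complex_even (n := 0) rfl
    (h.isSubquotient_swap_rotationComplex_even rfl) h.isSubquotient_swap_rotationComplex_one
    h.isSubquotient_swap_twoAddTrace).congr .uniqueProd

lemma isSubquotient_swap_i4Complex_add_five (h : O.IsTrivial) :
    IsSubquotient (O.swap.i4Complex.cocycles (m + 5)) (O.swap.i4Complex.coboundaries (m + 5))
      (ZMod 2 × ZMod 2) := by
  rcases hm : m.bodd with _ | _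
  · exact (h.isInvolutory_swap.isSubquotient_i4Complex_odd (n := m + 1) (by simp [hm])
      (h.isSubquotient_swap_rotationComplex_odd (by simp [hm]))
      (h.isSubquotient_swap_rotationComplex_even hm) h.isSubquotient_swap_evenTrace_two).congr
      (.prodCongr (.refl ℤ _) .uniqueProd)
  · exact (h.isInvolutory_swap.isSubquotient_i4Complex_even (n := m + 1) (by simp [hm])
      (h.isSubquotient_swap_rotationComplex_even (by simp [hm]))
      (h.isSubquotient_swap_rotationComplex_odd hm) h.isSubquotient_swap_twoAddTrace).congr
      .uniqueProd

lemma isSubquotient_sign_i4Complex_one (h : O.IsTrivial) :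
    IsSubquotient (O.sign.i4Complex.cocycles 1) (O.sign.i4Complex.coboundaries 1) PUnit.{1} :=
  h.isInvolutory_sign.isSubquotient_i4Complex_one
    (h.isSubquotient_sign_rotationComplex_odd (m := 0) rfl)

lemma isSubquotient_sign_i4Complex_two (h : O.IsTrivial) :
    IsSubquotient (O.sign.i4Complex.cocycles 2) (O.sign.i4Complex.coboundaries 2) (ZMod 2) :=
  (h.isInvolutory_sign.isSubquotient_i4Complex_two
    (h.isSubquotient_sign_rotationComplex_even (m := 0) rfl)
    (h.isSubquotient_sign_rotationComplex_odd (m := 0) rfl)).congr .prodUnique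

lemma isSubquotient_sign_i4Complex_three (h : O.IsTrivial) :
    IsSubquotient (O.sign.i4Complex.cocycles 3) (O.sign.i4Complex.coboundaries 3) (ZMod 4) :=
  (h.isInvolutory_sign.isSubquotient_i4Complex_three
    (h.isSubquotient_sign_rotationComplex_odd (m := 2) rfl)
    h.isSubquotient_sign_evenTrace_twoSub).congr .uniqueProd

lemma isSubquotient_sign_i4Complex_add_four (h : O.IsTrivial) :
    IsSubquotient (O.sign.i4Complex.cocycles (m + 4)) (O.sign.i4Complex.coboundaries (m + 4))
      (ZMod 2 × ZMod 2) := by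
  rcases hm : m.bodd with _ | _
  · exact (h.isInvolutory_sign.isSubquotient_i4Complex_even hm
      (h.isSubquotient_sign_rotationComplex_even (by simp [hm]))
      (h.isSubquotient_sign_rotationComplex_odd hm) h.isSubquotient_sign_twoAddTrace).congr
      (.prodCongr (.refl ℤ _) .uniqueProd)
  · obtain ⟨m, rfl⟩ : ∃ l, m = l + 1 :=
      Nat.exists_eq_succ_of_ne_zero fun h0 => by simp [h0] at hm
    exact (h.isInvolutory_sign.isSubquotient_i4Complex_odd hm
      (h.isSubquotient_sign_rotationComplex_odd (by simpa using hm))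
      (h.isSubquotient_sign_rotationComplex_even (by simpa using hm))
      h.isSubquotient_sign_evenTrace_two).congr .uniqueProd

end I4Action.IsTrivial

end Levels

section Integral

namespace CrysAction

variable {k V T U W : Type*} [CommRing k] [AddCommGroup V] [Module k V] [AddCommGroup T]
  [Module k T] [AddCommGroup U] [Module k U] [AddCommGroup W] [Module k W] {O : CrysAction k V}

lemma isSubquotient_complex_of_trivial (he : ∀ a, O.e a = a) (hf : ∀ a, O.f a = a) {m : ℕ}
    (hT : IsSubquotient (O.i4Complex.cocycles (m + 2)) (O.i4Complex.coboundaries (m + 2)) T)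
    (hU : IsSubquotient (O.swap.i4Complex.cocycles (m + 1))
      (O.swap.i4Complex.coboundaries (m + 1)) U)
    (hW : IsSubquotient (O.sign.i4Complex.cocycles m) (O.sign.i4Complex.coboundaries m) W) :
    IsSubquotient (O.complex.cocycles (m + 2)) (O.complex.coboundaries (m + 2)) (T × U × W) := by
  refine PeriodicComplex.isSubquotient_tot_of_eq_zero (fun p => LinearMap.ext fun y => ?_)
    (fun p => LinearMap.ext fun y => ?_) hT hU hW
  · simp [I4Action.Equivariant.i4Map_apply, I4Action.Equivariant.p4Map_apply, he, hf]
  · simp [I4Action.Equivariant.i4Map_apply, I4Action.Equivariant.p4Map_apply, he, hf]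

end CrysAction

namespace HolGroup

/-- The operators of the trivial representation on `ℤ`. -/
noncomputable abbrev integralOperators : CrysAction ℤ ℤ :=
  operators (Representation.trivial ℤ HolGroup ℤ)

lemma isTrivial_integralOperators : integralOperators.IsTrivial :=
  ⟨fun _ => rfl, fun _ => rfl, fun _ => rfl, fun _ => rfl⟩

theorem nonempty_addEquiv_of_isSubquotient {T U W : Type*} [AddCommGroup T] [AddCommGroup U]
    [AddCommGroup W] (n : ℕ)
    (hT : IsSubquotient (integralOperators.i4Complex.cocycles (n + 2))
      (integralOperators.i4Complex.coboundaries (n + 2)) T)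
    (hU : IsSubquotient (integralOperators.swap.i4Complex.cocycles (n + 1))
      (integralOperators.swap.i4Complex.coboundaries (n + 1)) U)
    (hW : IsSubquotient (integralOperators.sign.i4Complex.cocycles n)
      (integralOperators.sign.i4Complex.coboundaries n) W) :
    Nonempty (H (n + 1) ≃+ T × U × W) := by
  obtain ⟨iso⟩ := nonempty_homology_cochainsFunctor_iso (n + 1) (Rep.trivial ℤ HolGroup ℤ)
  obtain ⟨equiv⟩ := PeriodicComplex.nonempty_homology_equiv_of_isSubquotient _ n
    (integralOperators.isSubquotient_complex_of_trivial (fun _ => rfl) (fun _ => rfl) hT hU hW)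
  exact ⟨(iso.symm.toLinearEquiv ≪≫ₗ equiv).toAddEquiv⟩

end HolGroup
end Integral

section Degrees

namespace HolGroup

theorem nonempty_addEquiv_H_one : Nonempty (H 1 ≃+ (Fin 2 → ℤ)) := by
  obtain ⟨equiv⟩ := nonempty_addEquiv_of_isSubquotient (W := PUnit.{1}) 0
    isTrivial_integralOperators.isSubquotient_i4Complex_two
    isTrivial_integralOperators.isSubquotient_swap_i4Complex_one
    (PeriodicComplex.isSubquotient_zero _)
  exact ⟨equiv.trans
    { toFun z := ![z.1, z.2.1]
      invFun w := (w 0, w 1, 0)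
      right_inv w := by ext i; fin_cases i <;> rfl
      map_add' z w := by ext i; fin_cases i <;> rfl }⟩

theorem nonempty_addEquiv_H_two : Nonempty (H 2 ≃+ ((Fin 2 → ℤ) × ZMod 4)) := by
  obtain ⟨equiv⟩ := nonempty_addEquiv_of_isSubquotient 1
    isTrivial_integralOperators.isSubquotient_i4Complex_three
    isTrivial_integralOperators.isSubquotient_swap_i4Complex_two
    isTrivial_integralOperators.isSubquotient_sign_i4Complex_one
  exact ⟨equiv.trans
    { toFun z := (![z.1.2, z.2.1], z.1.1)
      invFun w := ((w.2, w.1 0), w.1 1, 0)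
      right_inv w := by ext i <;> (try fin_cases i) <;> rfl
      map_add' z w := by ext i <;> (try fin_cases i) <;> rfl }⟩

theorem nonempty_addEquiv_H_three :
    Nonempty (H 3 ≃+ ((Fin 2 → ℤ) × (Fin 4 → ZMod 2))) := by
  obtain ⟨equiv⟩ := nonempty_addEquiv_of_isSubquotient 2
    isTrivial_integralOperators.isSubquotient_i4Complex_four
    isTrivial_integralOperators.isSubquotient_swap_i4Complex_three
    isTrivial_integralOperators.isSubquotient_sign_i4Complex_two
  exact ⟨equiv.trans
    { toFun z := (![z.1.1, z.2.1.2.1], ![z.1.2, z.2.1.1, z.2.1.2.2, z.2.2])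
      invFun w := ((w.1 0, w.2 0), (w.2 1, w.1 1, w.2 2), w.2 3)
      right_inv w := by ext i <;> fin_cases i <;> rfl
      map_add' z w := by ext i <;> fin_cases i <;> rfl }⟩

theorem nonempty_addEquiv_H_four :
    Nonempty (H 4 ≃+ (ℤ × (Fin 2 → ZMod 4) × (Fin 2 → ZMod 2))) := by
  obtain ⟨equiv⟩ := nonempty_addEquiv_of_isSubquotient 3
    (isTrivial_integralOperators.isSubquotient_i4Complex_add_five (m := 0))
    isTrivial_integralOperators.isSubquotient_swap_i4Complex_four
    isTrivial_integralOperators.isSubquotient_sign_i4Complex_three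
  exact ⟨equiv.trans
    { toFun z := (z.2.1.1, ![z.1.1, z.2.2], ![z.1.2, z.2.1.2])
      invFun w := ((w.2.1 0, w.2.2 0), (w.1, w.2.2 1), w.2.1 1)
      right_inv w := by ext i <;> (try fin_cases i) <;> rfl
      map_add' z w := by ext i <;> (try fin_cases i) <;> rfl }⟩

theorem nonempty_addEquiv_H_add_five (j : ℕ) :
    Nonempty (H (j + 5) ≃+ (ZMod 4 × (Fin 5 → ZMod 2))) := by
  obtain ⟨equiv⟩ := nonempty_addEquiv_of_isSubquotient (j + 4)
    (isTrivial_integralOperators.isSubquotient_i4Complex_add_five (m := j + 1))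
    isTrivial_integralOperators.isSubquotient_swap_i4Complex_add_five
    isTrivial_integralOperators.isSubquotient_sign_i4Complex_add_four
  exact ⟨equiv.trans
    { toFun z := (z.1.1, ![z.1.2, z.2.1.1, z.2.1.2, z.2.2.1, z.2.2.2])
      invFun w := ((w.1, w.2 0), (w.2 1, w.2 2), w.2 3, w.2 4)
      right_inv w := by ext i <;> (try fin_cases i) <;> rfl
      map_add' z w := by ext i <;> (try fin_cases i) <;> rfl }⟩

end HolGroup

end Degrees

theorem cohomology_min82_1_7 :
    Nonempty (H 1 ≃+ (Fin 2 → ℤ)) ∧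
    Nonempty (H 2 ≃+ ((Fin 2 → ℤ) × ZMod 4)) ∧
    Nonempty (H 3 ≃+ ((Fin 2 → ℤ) × (Fin 4 → ZMod 2))) ∧
    Nonempty (H 4 ≃+ (ℤ × (Fin 2 → ZMod 4) × (Fin 2 → ZMod 2))) ∧
    (∀ i, 5 ≤ i → Nonempty (H i ≃+ (ZMod 4 × (Fin 5 → ZMod 2)))) := by
  refine ⟨HolGroup.nonempty_addEquiv_H_one, HolGroup.nonempty_addEquiv_H_two,
    HolGroup.nonempty_addEquiv_H_three, HolGroup.nonempty_addEquiv_H_four, fun i hi => ?_⟩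
  obtain ⟨j, rfl⟩ := Nat.exists_eq_add_of_le' hi
  exact HolGroup.nonempty_addEquiv_H_add_five j
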